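/- arXiv:2502.18606 — 4 statements merged into one kernel-verified Lean document; each statement's English description precedes it below -/
import Mathlib

section
/- Let d ≥ 1 and let g : ℝ^d → ℝ be a smooth, strictly positive function with Gaussian-type bounds (there exist constants 0 < c ≤ C and β, β' > 0 with c·e^{−β|x|²} ≤ g(x) ≤ C·e^{−β'|x|²}, and every derivative of log g up to order four grows at most polynomially). Then 2∫_{ℝ^d} (∇g/g)·∇(Δg) dx − ∫_{ℝ^d} (|∇g|²/g²)·Δg dx = −2∫_{ℝ^d} g·‖∇² log g‖_F² dx ≤ 0, where ∇² log g is the Hessian matrix of log g and ‖·‖_F the Frobenius norm. (Fisher-information part of the lemma on decay along the heat flow.) -/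
open MeasureTheory Real

noncomputable section

/-- Partial derivative of `g : ℝ^d → ℝ` in the `i`-th coordinate direction. -/
def pd {d : ℕ} (g : (Fin d → ℝ) → ℝ) (x : Fin d → ℝ) (i : Fin d) : ℝ :=
  fderiv ℝ g x (Pi.single i 1)

/-- Laplacian of `g : ℝ^d → ℝ`. -/
def lap {d : ℕ} (g : (Fin d → ℝ) → ℝ) (x : Fin d → ℝ) : ℝ :=
  ∑ i, pd (fun y => pd g y i) x i

section PartialDerivatives

variable {d : ℕ} {u v : (Fin d → ℝ) → ℝ} {x : Fin d → ℝ}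

lemma pd_add (hu : DifferentiableAt ℝ u x) (hv : DifferentiableAt ℝ v x) (i : Fin d) :
    pd (fun y => u y + v y) x i = pd u x i + pd v x i := by
  simp [pd, fderiv_fun_add hu hv]

lemma pd_mul (hu : DifferentiableAt ℝ u x) (hv : DifferentiableAt ℝ v x) (i : Fin d) :
    pd (fun y => u y * v y) x i = pd u x i * v x + u x * pd v x i := by
  simp only [pd, fderiv_fun_mul hu hv, add_apply, FunLike.coe_smul, Pi.smul_apply,
    smul_eq_mul]
  ring

lemma pd_const_mul (hu : DifferentiableAt ℝ u x) (c : ℝ) (i : Fin d) :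
    pd (fun y => c * u y) x i = c * pd u x i := by
  simp [pd, fderiv_const_mul hu]

lemma pd_sq (hu : DifferentiableAt ℝ u x) (i : Fin d) :
    pd (fun y => u y ^ 2) x i = 2 * u x * pd u x i := by
  simp only [pow_two, pd_mul hu hu]
  ring

lemma pd_sum {ι : Type*} (s : Finset ι) {w : ι → (Fin d → ℝ) → ℝ}
    (hw : ∀ j ∈ s, DifferentiableAt ℝ (w j) x) (i : Fin d) :
    pd (fun y => ∑ j ∈ s, w j y) x i = ∑ j ∈ s, pd (w j) x i := by
  simp [pd, fderiv_fun_sum hw]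

lemma pd_log (hu : DifferentiableAt ℝ u x) (hx : u x ≠ 0) (i : Fin d) :
    pd (fun y => Real.log (u y)) x i = pd u x i / u x := by
  simp [pd, fderiv.log hu hx, div_eq_inv_mul]

lemma ContDiff.pd (hu : ContDiff ℝ (⊤ : ℕ∞) u) (i : Fin d) :
    ContDiff ℝ (⊤ : ℕ∞) (fun y => pd u y i) :=
  (hu.fderiv_right (m := (⊤ : ℕ∞)) (by simp)).clm_apply contDiff_const

/-- Mixed second partial derivatives of a smooth function commute. -/
lemma pd_pd_comm (hu : ContDiff ℝ (⊤ : ℕ∞) u) (i j : Fin d) :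
    pd (fun y => pd u y i) x j = pd (fun y => pd u y j) x i := by
  have hd : DifferentiableAt ℝ (fderiv ℝ u) x :=
    ((hu.fderiv_right (m := (⊤ : ℕ∞)) (by simp)).differentiable (by simp)) x
  have hsymm : IsSymmSndFDerivAt ℝ u x :=
    hu.contDiffAt.isSymmSndFDerivAt (by
      rw [minSmoothness_of_isRCLikeNormedField]
      exact WithTop.coe_le_coe.2 (le_top : (2 : ℕ∞) ≤ ⊤))
  have key : ∀ a b : Fin d, pd (fun y => pd u y a) x b =
      fderiv ℝ (fderiv ℝ u) x (Pi.single b 1) (Pi.single a 1) := by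
    intro a b
    simp only [pd]
    rw [fderiv_clm_apply hd (differentiableAt_const _)]
    simp
  rw [key, key]
  exact hsymm _ _

end PartialDerivatives

section Growth

variable {E : Type*} [NormedAddCommGroup E]

/-- Continuous functions of at most polynomial growth. -/
def PolyGrowth (u : E → ℝ) : Prop :=
  Continuous u ∧ ∃ C : ℝ, ∃ n : ℕ, ∀ x, |u x| ≤ C * (1 + ‖x‖) ^ n

namespace PolyGrowth

variable {u v : E → ℝ}

lemma const (c : ℝ) : PolyGrowth (fun _ : E => c) :=
  ⟨continuous_const, |c|, 0, fun x => by simp⟩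

lemma add (hu : PolyGrowth u) (hv : PolyGrowth v) : PolyGrowth (fun x => u x + v x) := by
  obtain ⟨hu, C, n, hC⟩ := hu
  obtain ⟨hv, C', m, hC'⟩ := hv
  refine ⟨hu.add hv, |C| + |C'|, n + m, fun x => ?_⟩
  have h1 : 1 ≤ 1 + ‖x‖ := by linarith [norm_nonneg x]
  calc |u x + v x| ≤ |u x| + |v x| := abs_add_le _ _
    _ ≤ C * (1 + ‖x‖) ^ n + C' * (1 + ‖x‖) ^ m := add_le_add (hC x) (hC' x)
    _ ≤ |C| * (1 + ‖x‖) ^ (n + m) + |C'| * (1 + ‖x‖) ^ (n + m) := by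
        gcongr
        · exact le_abs_self C
        · omega
        · exact le_abs_self C'
        · omega
    _ = (|C| + |C'|) * (1 + ‖x‖) ^ (n + m) := by ring

lemma mul (hu : PolyGrowth u) (hv : PolyGrowth v) : PolyGrowth (fun x => u x * v x) := by
  obtain ⟨hu, C, n, hC⟩ := hu
  obtain ⟨hv, C', m, hC'⟩ := hv
  refine ⟨hu.mul hv, C * C', n + m, fun x => ?_⟩
  calc |u x * v x| = |u x| * |v x| := abs_mul _ _
    _ ≤ (C * (1 + ‖x‖) ^ n) * (C' * (1 + ‖x‖) ^ m) :=
        mul_le_mul (hC x) (hC' x) (abs_nonneg _) ((abs_nonneg _).trans (hC x))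
    _ = C * C' * (1 + ‖x‖) ^ (n + m) := by ring

lemma pow (hu : PolyGrowth u) (k : ℕ) : PolyGrowth (fun x => u x ^ k) := by
  induction k with
  | zero => simpa using const 1
  | succ k ih => simpa only [pow_succ] using ih.mul hu

lemma sum {ι : Type*} (s : Finset ι) {w : ι → E → ℝ} (hw : ∀ i ∈ s, PolyGrowth (w i)) :
    PolyGrowth (fun x => ∑ i ∈ s, w i x) := by
  classical
  induction s using Finset.induction_on with
  | empty => simpa using const 0
  | insert a s ha ih =>
    simp only [Finset.sum_insert ha]
    exact (hw a (Finset.mem_insert_self a s)).add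
      (ih fun i hi => hw i (Finset.mem_insert_of_mem hi))

end PolyGrowth

variable [NormedSpace ℝ E]

/-- Smooth functions whose derivatives up to order `N` grow at most polynomially. -/
def PolyGrowthUpTo (N : ℕ) (u : E → ℝ) : Prop :=
  ContDiff ℝ (⊤ : ℕ∞) u ∧ ∀ k ≤ N, ∃ C : ℝ, ∃ n : ℕ, ∀ x,
    ‖iteratedFDeriv ℝ k u x‖ ≤ C * (1 + ‖x‖) ^ n

lemma PolyGrowthUpTo.polyGrowth {N : ℕ} {u : E → ℝ} (hu : PolyGrowthUpTo N u) :
    PolyGrowth u := by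
  obtain ⟨C, n, h⟩ := hu.2 0 (Nat.zero_le N)
  exact ⟨hu.1.continuous, C, n, fun x => by simpa using h x⟩

lemma PolyGrowthUpTo.pd {d N : ℕ} {u : (Fin d → ℝ) → ℝ} (hu : PolyGrowthUpTo (N + 1) u)
    (i : Fin d) : PolyGrowthUpTo N (fun y => pd u y i) := by
  refine ⟨hu.1.pd i, fun k hk => ?_⟩
  obtain ⟨C, n, h⟩ := hu.2 (k + 1) (by omega)
  refine ⟨‖(Pi.single i 1 : Fin d → ℝ)‖ * C, n, fun x => ?_⟩
  have hfd : ContDiff ℝ (⊤ : ℕ∞) (fderiv ℝ u) := hu.1.fderiv_right (by simp)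
  calc ‖iteratedFDeriv ℝ k (fun y => fderiv ℝ u y (Pi.single i 1)) x‖
      ≤ ‖(Pi.single i 1 : Fin d → ℝ)‖ * ‖iteratedFDeriv ℝ k (fderiv ℝ u) x‖ :=
        norm_iteratedFDeriv_clm_apply_const hfd.contDiffAt (by exact_mod_cast le_top)
    _ ≤ ‖(Pi.single i 1 : Fin d → ℝ)‖ * (C * (1 + ‖x‖) ^ n) := by
        rw [norm_iteratedFDeriv_fderiv]
        exact mul_le_mul_of_nonneg_left (h x) (norm_nonneg _)
    _ = _ := by ring

end Growth

lemma integrable_exp_neg_mul_sum_sq {d : ℕ} {b : ℝ} (hb : 0 < b) :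
    Integrable (fun x : Fin d → ℝ => Real.exp (-b * ∑ i, x i ^ 2)) := by
  have h := Integrable.fintype_prod (μ := fun _ : Fin d => (volume : Measure ℝ))
    (f := fun _ t => Real.exp (-b * t ^ 2)) fun _ => integrable_exp_neg_mul_sq hb
  simp only [Finset.mul_sum, Real.exp_sum]
  exact h

lemma sq_norm_le_sum_sq {d : ℕ} (x : Fin d → ℝ) : ‖x‖ ^ 2 ≤ ∑ i, x i ^ 2 := by
  have hS : 0 ≤ ∑ i, x i ^ 2 := Finset.sum_nonneg fun i _ => sq_nonneg _
  have h : ‖x‖ ≤ √(∑ i, x i ^ 2) := by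
    refine (pi_norm_le_iff_of_nonneg (Real.sqrt_nonneg _)).2 fun i => ?_
    rw [Real.norm_eq_abs]
    exact Real.abs_le_sqrt
      (Finset.single_le_sum (f := fun i => x i ^ 2) (fun i _ => sq_nonneg _) (Finset.mem_univ i))
  calc ‖x‖ ^ 2 ≤ √(∑ i, x i ^ 2) ^ 2 := by gcongr
    _ = _ := Real.sq_sqrt hS

lemma one_add_pow_le_mul_exp_sq {b : ℝ} (hb : 0 < b) (n : ℕ) {r : ℝ} (hr : 0 ≤ r) :
    (1 + r) ^ n ≤ n.factorial * Real.exp (1 + 1 / (4 * b)) * Real.exp (b * r ^ 2) := by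
  have hfac : (0 : ℝ) < n.factorial := by exact_mod_cast n.factorial_pos
  have h := Real.pow_div_factorial_le_exp (x := 1 + r) (by linarith) n
  rw [div_le_iff₀ hfac] at h
  have hexp : 1 + r ≤ 1 + 1 / (4 * b) + b * r ^ 2 := by
    have : 1 / (4 * b) + b * r ^ 2 - r = b * (r - 1 / (2 * b)) ^ 2 := by
      field_simp
      ring
    have : 0 ≤ b * (r - 1 / (2 * b)) ^ 2 := by positivity
    linarith
  calc (1 + r) ^ n ≤ Real.exp (1 + r) * n.factorial := h
    _ ≤ Real.exp (1 + 1 / (4 * b) + b * r ^ 2) * n.factorial := by gcongr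
    _ = _ := by rw [Real.exp_add (1 + 1 / (4 * b))]; ring

/-- A function with a Gaussian upper bound is integrable against functions of polynomial growth. -/
lemma PolyGrowth.integrable_mul_of_le_gaussian {d : ℕ} {g u : (Fin d → ℝ) → ℝ}
    (hu : PolyGrowth u) (hg : Continuous g) {C b : ℝ} (hb : 0 < b)
    (hgb : ∀ x, |g x| ≤ C * Real.exp (-b * ∑ i, x i ^ 2)) :
    Integrable (fun x => g x * u x) := by
  obtain ⟨hc, K, n, hK⟩ := hu
  have hb2 : 0 < b / 2 := by linarith
  have hC : 0 ≤ C := by simpa using (abs_nonneg _).trans (hgb 0)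
  have hK0 : 0 ≤ K := by simpa using (abs_nonneg _).trans (hK 0)
  set A : ℝ := n.factorial * Real.exp (1 + 1 / (4 * (b / 2)))
  refine ((integrable_exp_neg_mul_sum_sq (d := d) hb2).const_mul (C * K * A)).mono'
    (hg.mul hc).aestronglyMeasurable (Filter.Eventually.of_forall fun x => ?_)
  have hA : (1 + ‖x‖) ^ n ≤ A * Real.exp (b / 2 * ∑ i, x i ^ 2) :=
    (one_add_pow_le_mul_exp_sq hb2 n (norm_nonneg x)).trans
      (by gcongr; exact sq_norm_le_sum_sq x)
  calc ‖g x * u x‖ = |g x| * |u x| := by rw [Real.norm_eq_abs, abs_mul]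
    _ ≤ (C * Real.exp (-b * ∑ i, x i ^ 2)) * (K * (1 + ‖x‖) ^ n) :=
        mul_le_mul (hgb x) (hK x) (abs_nonneg _) ((abs_nonneg _).trans (hgb x))
    _ ≤ (C * Real.exp (-b * ∑ i, x i ^ 2)) * (K * (A * Real.exp (b / 2 * ∑ i, x i ^ 2))) := by
        gcongr
    _ = C * K * A * (Real.exp (-b * ∑ i, x i ^ 2) * Real.exp (b / 2 * ∑ i, x i ^ 2)) := by ring
    _ = C * K * A * Real.exp (-(b / 2) * ∑ i, x i ^ 2) := by
        rw [← Real.exp_add]; ring_nf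


/-- Fisher-information part of the lemma on decay along the heat flow:
`2∫ (∇g/g)·∇(Δg) − ∫ (|∇g|²/g²)·Δg = −2∫ g‖∇² log g‖_F² ≤ 0`. -/
theorem fisher_decay_along_heat_flow
    {d : ℕ} (hd : 1 ≤ d) (g : (Fin d → ℝ) → ℝ)
    (hsmooth : ContDiff ℝ (⊤ : ℕ∞) g) (hpos : ∀ x, 0 < g x)
    (hGauss : ∃ c C β β' : ℝ, 0 < c ∧ c ≤ C ∧ 0 < β ∧ 0 < β' ∧ ∀ x,
        c * Real.exp (-β * ∑ i, (x i) ^ 2) ≤ g x ∧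
        g x ≤ C * Real.exp (-β' * ∑ i, (x i) ^ 2))
    (hPoly : ∀ k : ℕ, k ≤ 4 → ∃ C : ℝ, ∃ n : ℕ, ∀ x,
        ‖iteratedFDeriv ℝ k (fun y => Real.log (g y)) x‖ ≤ C * (1 + ‖x‖) ^ n) :
    2 * (∫ x, (∑ i, pd g x i * pd (lap g) x i) / g x)
      - (∫ x, ((∑ i, (pd g x i) ^ 2) / (g x) ^ 2) * lap g x)
      = -2 * ∫ x, g x * ∑ i, ∑ j,
          (pd (fun y => pd (fun z => Real.log (g z)) y j) x i) ^ 2 ∧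
    2 * (∫ x, (∑ i, pd g x i * pd (lap g) x i) / g x)
      - (∫ x, ((∑ i, (pd g x i) ^ 2) / (g x) ^ 2) * lap g x) ≤ 0 := by
  obtain ⟨c, C, β, β', -, -, -, hβ', hbd⟩ := hGauss
  set f : (Fin d → ℝ) → ℝ := fun y => Real.log (g y) with hf_def
  have hf : PolyGrowthUpTo 4 f := ⟨hsmooth.log fun x => (hpos x).ne', hPoly⟩
  have hf₁ (i) : PolyGrowthUpTo 3 (fun y => pd f y i) := hf.pd i
  have hf₂ (j i) : PolyGrowthUpTo 2 (fun y => pd (fun z => pd f z j) y i) := (hf₁ j).pd i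
  have hf₃ (k j i) : PolyGrowthUpTo 1 (fun y => pd (fun z => pd (fun w => pd f w k) z j) y i) :=
    (hf₂ k j).pd i
  have diff {N : ℕ} {u : (Fin d → ℝ) → ℝ} (hu : PolyGrowthUpTo N u) : Differentiable ℝ u :=
    hu.1.differentiable (by simp)
  have hgd : Differentiable ℝ g := hsmooth.differentiable (by simp)
  have integrable_mul {u : (Fin d → ℝ) → ℝ} (hu : PolyGrowth u) :
      Integrable (fun x => g x * u x) :=
    hu.integrable_mul_of_le_gaussian hsmooth.continuous hβ'
      fun x => by rw [abs_of_pos (hpos x)]; exact (hbd x).2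
  -- Derivatives of `g` in terms of those of `f = log g`.
  have hg₁ (i) : (fun y => pd g y i) = fun y => g y * pd f y i := by
    funext y
    rw [hf_def, pd_log (hgd y) (hpos y).ne']
    field_simp [(hpos y).ne']
  have hg₁' (x i) : pd g x i = g x * pd f x i := congrFun (hg₁ i) x
  let h : (Fin d → ℝ) → ℝ := fun y => ∑ j, (pd (fun z => pd f z j) y j + pd f y j ^ 2)
  have hh (x i) : pd h x i = ∑ j, (pd (fun y => pd (fun z => pd f z j) y j) x i
      + 2 * pd f x j * pd (fun y => pd f y j) x i) := by
    simp only [h]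
    rw [pd_sum _ fun j _ => (diff (hf₂ j j) x).fun_add ((diff (hf₁ j) x).fun_pow 2)]
    refine Finset.sum_congr rfl fun j _ => ?_
    rw [pd_add (diff (hf₂ j j) x) ((diff (hf₁ j) x).fun_pow 2), pd_sq (diff (hf₁ j) x)]
  have hlap : lap g = fun y => g y * h y := by
    funext y
    simp only [lap, h, Finset.mul_sum]
    refine Finset.sum_congr rfl fun i _ => ?_
    rw [hg₁, pd_mul (hgd y) (diff (hf₁ i) y), hg₁']
    ring
  have hhd : Differentiable ℝ h := fun x =>
    DifferentiableAt.fun_sum fun j _ => (diff (hf₂ j j) x).fun_add ((diff (hf₁ j) x).fun_pow 2)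
  have hlap₁ (x i) : pd (lap g) x i = g x * (pd f x i * h x + pd h x i) := by
    rw [hlap, pd_mul (hgd x) (hhd x), hg₁']
    ring
  have hpgh : PolyGrowth h :=
    .sum _ fun j _ => (hf₂ j j).polyGrowth.add ((hf₁ j).polyGrowth.pow 2)
  have hpgh₁ (i) : PolyGrowth (fun x => pd h x i) := by
    simp only [hh]
    exact .sum _ fun j _ => (hf₃ j j i).polyGrowth.add
      (((PolyGrowth.const 2).mul (hf₁ j).polyGrowth).mul (hf₂ j i).polyGrowth)
  -- The three integrands, each of the form `g` times a function of polynomial growth.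
  have hF₁ (x) : (∑ i, pd g x i * pd (lap g) x i) / g x
      = g x * ∑ i, pd f x i * (pd f x i * h x + pd h x i) := by
    rw [div_eq_iff (hpos x).ne', Finset.mul_sum, Finset.sum_mul]
    refine Finset.sum_congr rfl fun i _ => ?_
    rw [hg₁', hlap₁]
    ring
  have hF₂ (x) : ((∑ i, pd g x i ^ 2) / g x ^ 2) * lap g x
      = g x * ((∑ i, pd f x i ^ 2) * h x) := by
    have hsum : ∑ i, pd g x i ^ 2 = g x ^ 2 * ∑ i, pd f x i ^ 2 := by
      rw [Finset.mul_sum]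
      exact Finset.sum_congr rfl fun i _ => by rw [hg₁']; ring
    rw [hsum, hlap, mul_div_cancel_left₀ _ (pow_pos (hpos x) 2).ne']
    ring
  have hI₁ := integrable_mul (.sum Finset.univ fun i _ =>
    (hf₁ i).polyGrowth.mul (((hf₁ i).polyGrowth.mul hpgh).add (hpgh₁ i)))
  have hI₂ := integrable_mul
    ((PolyGrowth.sum Finset.univ fun i _ => (hf₁ i).polyGrowth.pow 2).mul hpgh)
  have hI₃ := integrable_mul (.sum Finset.univ fun i _ =>
    .sum Finset.univ fun j _ => (hf₂ j i).polyGrowth.pow 2)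
  -- The vector fields whose divergences against `g` integrate to zero.
  let V (i j : Fin d) : (Fin d → ℝ) → ℝ := fun y =>
    2 * (pd f y i * pd (fun z => pd f z j) y i) + pd f y i ^ 2 * pd f y j
  have hVd (i j) : Differentiable ℝ (V i j) :=
    (((diff (hf₁ i)).mul (diff (hf₂ j i))).const_mul 2).add
      (((diff (hf₁ i)).pow 2).mul (diff (hf₁ j)))
  have hV₁ (i j x) : pd (V i j) x j
      = 2 * (pd (fun z => pd f z j) x i ^ 2
          + pd f x i * pd (fun y => pd (fun z => pd f z j) y j) x i)
        + (2 * pd f x i * pd (fun z => pd f z j) x i * pd f x j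
          + pd f x i ^ 2 * pd (fun z => pd f z j) x j) := by
    have d₁ := diff (hf₁ i) x
    have d₂ := diff (hf₂ j i) x
    have d₃ := diff (hf₁ j) x
    simp only [V]
    rw [pd_add ((d₁.fun_mul d₂).const_mul 2) ((d₁.fun_pow 2).fun_mul d₃), pd_const_mul (d₁.fun_mul d₂),
      pd_mul d₁ d₂, pd_mul (d₁.fun_pow 2) d₃, pd_sq d₁, pd_pd_comm hf.1 i j,
      pd_pd_comm (hf₁ j).1 i j]
    ring
  have hVg (i j) : PolyGrowth (V i j) :=
    ((PolyGrowth.const 2).mul ((hf₁ i).polyGrowth.mul (hf₂ j i).polyGrowth)).add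
      (((hf₁ i).polyGrowth.pow 2).mul (hf₁ j).polyGrowth)
  have hVg₁ (i j) : PolyGrowth (fun x => pd (V i j) x j) := by
    simp only [hV₁]
    exact ((PolyGrowth.const 2).mul (((hf₂ j i).polyGrowth.pow 2).add
      ((hf₁ i).polyGrowth.mul (hf₃ j j i).polyGrowth))).add
      (((((PolyGrowth.const 2).mul (hf₁ i).polyGrowth).mul (hf₂ j i).polyGrowth).mul
        (hf₁ j).polyGrowth).add (((hf₁ i).polyGrowth.pow 2).mul (hf₂ j j).polyGrowth))
  have hIV (i j) : Integrable (fun x => g x * (pd f x j * V i j x + pd (V i j) x j)) :=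
    integrable_mul (((hf₁ j).polyGrowth.mul (hVg i j)).add (hVg₁ i j))
  have hdiv (i j) : ∫ x, g x * (pd f x j * V i j x + pd (V i j) x j) = 0 := by
    have hA : Integrable (fun x => pd g x j * V i j x) := by
      simpa only [hg₁', mul_assoc] using integrable_mul ((hf₁ j).polyGrowth.mul (hVg i j))
    have hB := integrable_mul (hVg₁ i j)
    have hparts := integral_mul_fderiv_eq_neg_fderiv_mul_of_integrable (μ := volume)
      (v := Pi.single j 1) hA hB (integrable_mul (hVg i j)) (fun x _ => hgd x)
      (fun x _ => hVd i j x)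
    have hsplit (x) : g x * (pd f x j * V i j x + pd (V i j) x j)
        = pd g x j * V i j x + g x * pd (V i j) x j := by
      rw [hg₁']
      ring
    simp only [hsplit]
    rw [integral_add hA hB]
    simp only [pd] at hparts ⊢
    linarith
  have hpointwise (x) : 2 * (g x * ∑ i, pd f x i * (pd f x i * h x + pd h x i))
      - g x * ((∑ i, pd f x i ^ 2) * h x)
      + 2 * (g x * ∑ i, ∑ j, pd (fun y => pd f y j) x i ^ 2)
      = ∑ i, ∑ j, g x * (pd f x j * V i j x + pd (V i j) x j) := by
    rw [Finset.sum_mul]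
    simp only [hV₁, V, hh, h, Finset.mul_sum, ← Finset.sum_add_distrib,
      ← Finset.sum_sub_distrib]
    rw [Finset.sum_congr rfl fun i _ => Finset.sum_congr rfl fun j _ => ?_]
    ring
  have hzero : 2 * (∫ x, g x * ∑ i, pd f x i * (pd f x i * h x + pd h x i))
      - (∫ x, g x * ((∑ i, pd f x i ^ 2) * h x))
      + 2 * (∫ x, g x * ∑ i, ∑ j, pd (fun y => pd f y j) x i ^ 2) = 0 := by
    rw [← integral_const_mul, ← integral_const_mul,
      ← integral_sub (hI₁.const_mul 2) hI₂,
      ← integral_add (by exact (hI₁.const_mul 2).sub hI₂) (hI₃.const_mul 2)]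
    simp only [hpointwise]
    rw [integral_finsetSum _ fun i _ => integrable_finsetSum _ fun j _ => hIV i j]
    refine Finset.sum_eq_zero fun i _ => ?_
    rw [integral_finsetSum _ fun j _ => hIV i j]
    exact Finset.sum_eq_zero fun j _ => hdiv i j
  have hnonneg : 0 ≤ ∫ x, g x * ∑ i, ∑ j, pd (fun y => pd f y j) x i ^ 2 :=
    integral_nonneg fun x => mul_nonneg (hpos x).le
      (Finset.sum_nonneg fun i _ => Finset.sum_nonneg fun j _ => sq_nonneg _)
  simp only [hF₁, hF₂]
  constructor <;> linarith
end
end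

section
/- Let d₁, d₂ ≥ 1 and let g : ℝ^{d₁} × ℝ^{d₂} → ℝ, written g(x,y), be a smooth, strictly positive function with Gaussian-type bounds (Gaussian upper and lower bounds on ℝ^{d₁+d₂} and polynomial growth of all derivatives of log g up to order four). Then 2∫ (∇_y g/g)·∇_y(Δ_x g) dx dy − ∫ (|∇_y g|²/g²)·Δ_x g dx dy = −2∫ (1/g)·‖∇_x∇_y g − (∇_x g ⊗ ∇_y g)/g‖_F² dx dy ≤ 0, where ∇_x∇_y g is the d₁×d₂ matrix of mixed second partial derivatives, (∇_x g ⊗ ∇_y g)_{αγ} = ∂_{x_α}g · ∂_{y_γ}g, and ‖·‖_F is the Frobenius norm. (The mixed-block term Term_{i≠k} in the proof of Fisher-information decay along the heat flow.) -/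
open MeasureTheory Real

noncomputable section

variable {d₁ d₂ : ℕ}

/-- Partial derivative in the `i`-th coordinate of the first (`x`-) block. -/
def pdx (g : (Fin d₁ → ℝ) × (Fin d₂ → ℝ) → ℝ) (z : (Fin d₁ → ℝ) × (Fin d₂ → ℝ))
    (i : Fin d₁) : ℝ :=
  fderiv ℝ g z (Pi.single i 1, 0)

/-- Partial derivative in the `j`-th coordinate of the second (`y`-) block. -/
def pdy (g : (Fin d₁ → ℝ) × (Fin d₂ → ℝ) → ℝ) (z : (Fin d₁ → ℝ) × (Fin d₂ → ℝ))
    (j : Fin d₂) : ℝ :=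
  fderiv ℝ g z (0, Pi.single j 1)

/-- Laplacian in the first block of variables. -/
def lapx (g : (Fin d₁ → ℝ) × (Fin d₂ → ℝ) → ℝ) (z : (Fin d₁ → ℝ) × (Fin d₂ → ℝ)) : ℝ :=
  ∑ i, pdx (fun w => pdx g w i) z i

section DirectionalDerivative

variable {E : Type*} [NormedAddCommGroup E] [NormedSpace ℝ E]

/-- The derivative of `f` in the direction `v`, as a function of the base point. -/
def dirDeriv (v : E) (f : E → ℝ) : E → ℝ := fun z => fderiv ℝ f z v

theorem ContDiff.dirDeriv {f : E → ℝ} (hf : ContDiff ℝ (⊤ : ℕ∞) f) (v : E) :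
    ContDiff ℝ (⊤ : ℕ∞) (dirDeriv v f) :=
  (hf.fderiv_right (m := (⊤ : ℕ∞)) (by norm_cast)).clm_apply contDiff_const

theorem ContDiff.differentiableAt_of_top {f : E → ℝ} (hf : ContDiff ℝ (⊤ : ℕ∞) f) (z : E) :
    DifferentiableAt ℝ f z :=
  (hf.differentiable (by simp)) z

theorem dirDeriv_mul {f k : E → ℝ} (hf : ContDiff ℝ (⊤ : ℕ∞) f) (hk : ContDiff ℝ (⊤ : ℕ∞) k)
    (v z : E) :
    dirDeriv v (fun w => f w * k w) z = f z * dirDeriv v k z + k z * dirDeriv v f z := by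
  simp [dirDeriv, fderiv_fun_mul (hf.differentiableAt_of_top z) (hk.differentiableAt_of_top z)]

theorem dirDeriv_add {f k : E → ℝ} (hf : ContDiff ℝ (⊤ : ℕ∞) f) (hk : ContDiff ℝ (⊤ : ℕ∞) k)
    (v z : E) :
    dirDeriv v (fun w => f w + k w) z = dirDeriv v f z + dirDeriv v k z := by
  simp [dirDeriv, fderiv_fun_add (hf.differentiableAt_of_top z) (hk.differentiableAt_of_top z)]

theorem dirDeriv_sum {ι : Type*} (s : Finset ι) {f : ι → E → ℝ}
    (hf : ∀ i, ContDiff ℝ (⊤ : ℕ∞) (f i)) (v z : E) :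
    dirDeriv v (fun w => ∑ i ∈ s, f i w) z = ∑ i ∈ s, dirDeriv v (f i) z := by
  simp [dirDeriv, fderiv_fun_sum fun i _ => (hf i).differentiableAt_of_top z]

theorem dirDeriv_comm {f : E → ℝ} (hf : ContDiff ℝ (⊤ : ℕ∞) f) (u v : E) :
    dirDeriv u (dirDeriv v f) = dirDeriv v (dirDeriv u f) := by
  have hd : ∀ z, DifferentiableAt ℝ (fderiv ℝ f) z := fun z =>
    ((hf.fderiv_right (m := (⊤ : ℕ∞)) (by norm_cast)).differentiable (by simp)) z
  have key : ∀ u v z : E, dirDeriv u (dirDeriv v f) z = fderiv ℝ (fderiv ℝ f) z u v := by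
    intro u v z
    change fderiv ℝ (fun w => fderiv ℝ f w v) z u = _
    simp [fderiv_clm_apply (hd z) (differentiableAt_const v)]
  funext z
  rw [key, key]
  exact (hf.contDiffAt.isSymmSndFDerivAt (by simp; norm_cast)) u v

theorem dirDeriv_iteratedFDeriv_apply {f : E → ℝ} (hf : ContDiff ℝ (⊤ : ℕ∞) f) {n : ℕ} (u : E)
    (m : Fin n → E) :
    dirDeriv u (fun z => iteratedFDeriv ℝ n f z m)
      = fun z => iteratedFDeriv ℝ (n + 1) f z (Fin.cons u m : Fin (n + 1) → E) := by
  funext z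
  have hd : DifferentiableAt ℝ (iteratedFDeriv ℝ n f) z :=
    (hf.differentiable_iteratedFDeriv (m := n) (by norm_cast; exact ENat.natCast_lt_top n)) z
  rw [hd.iteratedFDeriv_succ_apply_left']
  rfl

/-! ### Derivatives of an exponential -/

variable {h : E → ℝ}

theorem dirDeriv_exp (hh : ContDiff ℝ (⊤ : ℕ∞) h) (v z : E) :
    dirDeriv v (fun w => exp (h w)) z = exp (h z) * dirDeriv v h z := by
  simp [dirDeriv, fderiv_exp (hh.differentiableAt_of_top z)]

theorem dirDeriv_exp_mul (hh : ContDiff ℝ (⊤ : ℕ∞) h) {f : E → ℝ} (hf : ContDiff ℝ (⊤ : ℕ∞) f)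
    (v z : E) :
    dirDeriv v (fun w => exp (h w) * f w) z
      = exp (h z) * (dirDeriv v h z * f z + dirDeriv v f z) := by
  rw [dirDeriv_mul hh.exp hf, dirDeriv_exp hh]
  ring

theorem dirDeriv_dirDeriv_exp (hh : ContDiff ℝ (⊤ : ℕ∞) h) (u v z : E) :
    dirDeriv u (dirDeriv v fun w => exp (h w)) z
      = exp (h z) * (dirDeriv u h z * dirDeriv v h z + dirDeriv u (dirDeriv v h) z) := by
  rw [funext (dirDeriv_exp hh v), dirDeriv_exp_mul hh (hh.dirDeriv v)]

theorem dirDeriv_dirDeriv_dirDeriv_exp (hh : ContDiff ℝ (⊤ : ℕ∞) h) (u v z : E) :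
    dirDeriv v (dirDeriv u (dirDeriv u fun w => exp (h w))) z
      = exp (h z) * (dirDeriv v h z * (dirDeriv u h z ^ 2 + dirDeriv u (dirDeriv u h) z)
        + 2 * dirDeriv u h z * dirDeriv u (dirDeriv v h) z
        + dirDeriv u (dirDeriv u (dirDeriv v h)) z) := by
  have hu := hh.dirDeriv u
  rw [funext (dirDeriv_dirDeriv_exp hh u u),
    dirDeriv_exp_mul hh ((hu.mul hu).add (hu.dirDeriv u)), dirDeriv_add (hu.mul hu) (hu.dirDeriv u),
    dirDeriv_mul hu hu, dirDeriv_comm hu v u, dirDeriv_comm hh v u]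
  ring

/-- The log-density form of `(∂_v g / g) ∂_v ∂_u² g`, divided by `g = exp h`. -/
def mixedTransport (h : E → ℝ) (u v z : E) : ℝ :=
  dirDeriv v h z * (dirDeriv v h z * (dirDeriv u h z ^ 2 + dirDeriv u (dirDeriv u h) z)
    + 2 * dirDeriv u h z * dirDeriv u (dirDeriv v h) z + dirDeriv u (dirDeriv u (dirDeriv v h)) z)

/-- The log-density form of `(∂_v g / g)² ∂_u² g`, divided by `g = exp h`. -/
def mixedWeight (h : E → ℝ) (u v z : E) : ℝ :=
  dirDeriv v h z ^ 2 * (dirDeriv u h z ^ 2 + dirDeriv u (dirDeriv u h) z)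

/-- The flux, divided by `g = exp h`, whose `u`-derivative is the integration-by-parts error. -/
def mixedFlux (h : E → ℝ) (u v z : E) : ℝ :=
  2 * (dirDeriv v h z * dirDeriv u (dirDeriv v h) z)
    + dirDeriv v h z * dirDeriv v h z * dirDeriv u h z

theorem ContDiff.mixedFlux (hh : ContDiff ℝ (⊤ : ℕ∞) h) (u v : E) :
    ContDiff ℝ (⊤ : ℕ∞) (mixedFlux h u v) :=
  have hv := hh.dirDeriv v
  (contDiff_const.mul (hv.mul (hv.dirDeriv u))).add ((hv.mul hv).mul (hh.dirDeriv u))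

theorem dirDeriv_exp_mul_mixedFlux (hh : ContDiff ℝ (⊤ : ℕ∞) h) (u v z : E) :
    dirDeriv u (fun w => exp (h w) * mixedFlux h u v w) z
      = 2 * (exp (h z) * mixedTransport h u v z) - exp (h z) * mixedWeight h u v z
        + 2 * (exp (h z) * dirDeriv u (dirDeriv v h) z ^ 2) := by
  have hu := hh.dirDeriv u
  have hv := hh.dirDeriv v
  have huv := hv.dirDeriv u
  have h2 : ContDiff ℝ (⊤ : ℕ∞) (fun _ : E => (2 : ℝ)) := contDiff_const
  have hc : dirDeriv u (fun _ : E => (2 : ℝ)) z = 0 := by simp [dirDeriv]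
  rw [dirDeriv_exp_mul hh (hh.mixedFlux u v)]
  unfold mixedFlux mixedTransport mixedWeight
  rw [dirDeriv_add (h2.mul (hv.mul huv)) ((hv.mul hv).mul hu), dirDeriv_mul h2 (hv.mul huv),
    dirDeriv_mul hv huv, dirDeriv_mul (hv.mul hv) hu, dirDeriv_mul hv hv, hc]
  ring

end DirectionalDerivative

section PolynomialGrowth

variable {E : Type*} [NormedAddCommGroup E]

/-- A continuous function of at most polynomial growth. -/
def HasPolyGrowth (f : E → ℝ) : Prop :=
  Continuous f ∧ ∃ (C : ℝ) (n : ℕ), ∀ z, |f z| ≤ C * (1 + ‖z‖) ^ n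

namespace HasPolyGrowth

variable {f k : E → ℝ}

theorem const (c : ℝ) : HasPolyGrowth (fun _ : E => c) :=
  ⟨continuous_const, |c|, 0, by simp⟩

theorem mul (hf : HasPolyGrowth f) (hk : HasPolyGrowth k) :
    HasPolyGrowth (fun z => f z * k z) := by
  obtain ⟨hfc, C, n, hC⟩ := hf
  obtain ⟨hkc, D, m, hD⟩ := hk
  refine ⟨hfc.mul hkc, C * D, n + m, fun z => ?_⟩
  calc |f z * k z| = |f z| * |k z| := abs_mul _ _
    _ ≤ (C * (1 + ‖z‖) ^ n) * (D * (1 + ‖z‖) ^ m) :=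
      mul_le_mul (hC z) (hD z) (abs_nonneg _) ((abs_nonneg _).trans (hC z))
    _ = C * D * (1 + ‖z‖) ^ (n + m) := by ring

theorem add (hf : HasPolyGrowth f) (hk : HasPolyGrowth k) :
    HasPolyGrowth (fun z => f z + k z) := by
  obtain ⟨hfc, C, n, hC⟩ := hf
  obtain ⟨hkc, D, m, hD⟩ := hk
  have hC0 : 0 ≤ C := by simpa using (abs_nonneg _).trans (hC 0)
  have hD0 : 0 ≤ D := by simpa using (abs_nonneg _).trans (hD 0)
  refine ⟨hfc.add hkc, C + D, n + m, fun z => ?_⟩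
  have h1 : 1 ≤ 1 + ‖z‖ := by simp
  calc |f z + k z| ≤ |f z| + |k z| := abs_add_le _ _
    _ ≤ C * (1 + ‖z‖) ^ n + D * (1 + ‖z‖) ^ m := add_le_add (hC z) (hD z)
    _ ≤ C * (1 + ‖z‖) ^ (n + m) + D * (1 + ‖z‖) ^ (n + m) := by
      gcongr <;> first | exact h1 | omega
    _ = (C + D) * (1 + ‖z‖) ^ (n + m) := by ring

theorem sq (hf : HasPolyGrowth f) : HasPolyGrowth (fun z => f z ^ 2) := by
  simpa only [pow_two] using hf.mul hf

/-- Gaussian decay beats polynomial growth. -/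
theorem integrable_gaussian_mul [NormedSpace ℝ E] [FiniteDimensional ℝ E] [MeasurableSpace E]
    [BorelSpace E] {μ : Measure E} [μ.IsAddHaarMeasure] {g : E → ℝ} (hg : Continuous g) {C b : ℝ}
    (hb : 0 < b) (hgb : ∀ z, |g z| ≤ C * exp (-b * ‖z‖ ^ 2)) (hf : HasPolyGrowth f) :
    Integrable (fun z => g z * f z) μ := by
  obtain ⟨hfc, D, n, hD⟩ := hf
  have hC0 : 0 ≤ C := by simpa using (abs_nonneg _).trans (hgb 0)
  have hD0 : 0 ≤ D := by simpa using (abs_nonneg _).trans (hD 0)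
  set N : ℕ := Module.finrank ℝ E + 1
  set m : ℕ := n + N with hm
  have hint : Integrable (fun z : E => (1 + ‖z‖) ^ (-(N : ℝ))) μ :=
    integrable_one_add_norm (by simp [N])
  refine (hint.const_mul (C * D * exp (m ^ 2 / (4 * b)))).mono'
    (hg.mul hfc).aestronglyMeasurable (.of_forall fun z => ?_)
  have hr : 0 < 1 + ‖z‖ := by positivity
  have hpow : (1 + ‖z‖) ^ m * exp (-b * ‖z‖ ^ 2) ≤ exp (m ^ 2 / (4 * b)) := by
    calc (1 + ‖z‖) ^ m * exp (-b * ‖z‖ ^ 2) ≤ exp ‖z‖ ^ m * exp (-b * ‖z‖ ^ 2) := by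
          gcongr
          linarith [add_one_le_exp ‖z‖]
      _ = exp (m * ‖z‖ + -b * ‖z‖ ^ 2) := by rw [← exp_nat_mul, ← exp_add]
      _ ≤ exp (m ^ 2 / (4 * b)) := by
          gcongr
          rw [le_div_iff₀ (by positivity)]
          nlinarith [sq_nonneg ((m : ℝ) - 2 * b * ‖z‖)]
  rw [rpow_neg hr.le, rpow_natCast, ← div_eq_mul_inv, le_div_iff₀ (by positivity), norm_eq_abs,
    abs_mul]
  calc |g z| * |f z| * (1 + ‖z‖) ^ N
      ≤ (C * exp (-b * ‖z‖ ^ 2)) * (D * (1 + ‖z‖) ^ n) * (1 + ‖z‖) ^ N := by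
        gcongr
        · exact hgb z
        · exact hD z
    _ = C * D * ((1 + ‖z‖) ^ m * exp (-b * ‖z‖ ^ 2)) := by rw [hm]; ring
    _ ≤ C * D * exp (m ^ 2 / (4 * b)) := by gcongr

theorem of_iteratedFDeriv [NormedSpace ℝ E] {h : E → ℝ} (hh : ContDiff ℝ (⊤ : ℕ∞) h) {k : ℕ}
    (hk : ∃ (C : ℝ) (n : ℕ), ∀ z, ‖iteratedFDeriv ℝ k h z‖ ≤ C * (1 + ‖z‖) ^ n) (m : Fin k → E) :
    HasPolyGrowth (fun z => iteratedFDeriv ℝ k h z m) := by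
  obtain ⟨C, n, hC⟩ := hk
  refine ⟨?_, C * ∏ i, ‖m i‖, n, fun z => ?_⟩
  · have := hh.continuous_iteratedFDeriv (m := k) (by norm_cast; exact le_top)
    fun_prop
  · calc |iteratedFDeriv ℝ k h z m| ≤ ‖iteratedFDeriv ℝ k h z‖ * ∏ i, ‖m i‖ :=
          (iteratedFDeriv ℝ k h z).le_opNorm m
      _ ≤ C * (1 + ‖z‖) ^ n * ∏ i, ‖m i‖ := by gcongr; exact hC z
      _ = C * (∏ i, ‖m i‖) * (1 + ‖z‖) ^ n := by ring

section Derivatives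

variable [NormedSpace ℝ E] {h : E → ℝ}

theorem dirDeriv (hh : ContDiff ℝ (⊤ : ℕ∞) h)
    (h₁ : ∃ (C : ℝ) (n : ℕ), ∀ z, ‖iteratedFDeriv ℝ 1 h z‖ ≤ C * (1 + ‖z‖) ^ n) (u : E) :
    HasPolyGrowth (_root_.dirDeriv u h) := by
  have := of_iteratedFDeriv hh h₁ ![u]
  rwa [show ![u] = (Fin.cons u ![] : Fin 1 → E) from rfl,
    ← dirDeriv_iteratedFDeriv_apply hh u] at this

theorem dirDeriv_dirDeriv (hh : ContDiff ℝ (⊤ : ℕ∞) h)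
    (h₂ : ∃ (C : ℝ) (n : ℕ), ∀ z, ‖iteratedFDeriv ℝ 2 h z‖ ≤ C * (1 + ‖z‖) ^ n) (u v : E) :
    HasPolyGrowth (_root_.dirDeriv u (_root_.dirDeriv v h)) := by
  have := of_iteratedFDeriv hh h₂ ![u, v]
  rwa [show ![u, v] = (Fin.cons u (Fin.cons v ![]) : Fin 2 → E) from rfl,
    ← dirDeriv_iteratedFDeriv_apply hh u, ← dirDeriv_iteratedFDeriv_apply hh v] at this

theorem dirDeriv_dirDeriv_dirDeriv (hh : ContDiff ℝ (⊤ : ℕ∞) h)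
    (h₃ : ∃ (C : ℝ) (n : ℕ), ∀ z, ‖iteratedFDeriv ℝ 3 h z‖ ≤ C * (1 + ‖z‖) ^ n) (u v w : E) :
    HasPolyGrowth (_root_.dirDeriv u (_root_.dirDeriv v (_root_.dirDeriv w h))) := by
  have := of_iteratedFDeriv hh h₃ ![u, v, w]
  rwa [show ![u, v, w] = (Fin.cons u (Fin.cons v (Fin.cons w ![])) : Fin 3 → E) from rfl,
    ← dirDeriv_iteratedFDeriv_apply hh u, ← dirDeriv_iteratedFDeriv_apply hh v,
    ← dirDeriv_iteratedFDeriv_apply hh w] at this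

end Derivatives

end HasPolyGrowth

end PolynomialGrowth

theorem integral_dirDeriv_eq_zero {E : Type*} [NormedAddCommGroup E] [NormedSpace ℝ E]
    [FiniteDimensional ℝ E] [MeasurableSpace E] [BorelSpace E] {μ : Measure E}
    [μ.IsAddHaarMeasure] {f : E → ℝ} (hf : ContDiff ℝ (⊤ : ℕ∞) f) (hfi : Integrable f μ) {v : E}
    (hfi' : Integrable (dirDeriv v f) μ) : ∫ z, dirDeriv v f z ∂μ = 0 := by
  have := integral_mul_fderiv_eq_neg_fderiv_mul_of_integrable (μ := μ) (f := fun _ : E => (1 : ℝ))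
    (g := f) (v := v) (by simp) (by simp only [one_mul]; exact hfi') (by simpa using hfi)
    (fun _ _ => differentiableAt_const _) (fun z _ => hf.differentiableAt_of_top z)
  simpa [dirDeriv] using this

section MixedBlock

variable {E : Type*} [NormedAddCommGroup E] [NormedSpace ℝ E] {h : E → ℝ}

theorem HasPolyGrowth.mixedTransport (hh : ContDiff ℝ (⊤ : ℕ∞) h)
    (hgrowth : ∀ k : ℕ, k ≤ 4 → ∃ (C : ℝ) (n : ℕ), ∀ z,
      ‖iteratedFDeriv ℝ k h z‖ ≤ C * (1 + ‖z‖) ^ n) (u v : E) :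
    HasPolyGrowth (mixedTransport h u v) := by
  have hu := HasPolyGrowth.dirDeriv hh (hgrowth 1 (by norm_num)) u
  have hv := HasPolyGrowth.dirDeriv hh (hgrowth 1 (by norm_num)) v
  have hD₂ := HasPolyGrowth.dirDeriv_dirDeriv hh (hgrowth 2 (by norm_num)) u
  have hD₃ := HasPolyGrowth.dirDeriv_dirDeriv_dirDeriv hh (hgrowth 3 (by norm_num)) u u v
  exact hv.mul (((hv.mul (hu.sq.add (hD₂ u))).add
    (((HasPolyGrowth.const 2).mul hu).mul (hD₂ v))).add hD₃)

theorem HasPolyGrowth.mixedWeight (hh : ContDiff ℝ (⊤ : ℕ∞) h)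
    (hgrowth : ∀ k : ℕ, k ≤ 4 → ∃ (C : ℝ) (n : ℕ), ∀ z,
      ‖iteratedFDeriv ℝ k h z‖ ≤ C * (1 + ‖z‖) ^ n) (u v : E) :
    HasPolyGrowth (mixedWeight h u v) := by
  have h₁ := HasPolyGrowth.dirDeriv hh (hgrowth 1 (by norm_num))
  exact (h₁ v).sq.mul ((h₁ u).sq.add
    (HasPolyGrowth.dirDeriv_dirDeriv hh (hgrowth 2 (by norm_num)) u u))

theorem HasPolyGrowth.mixedFlux (hh : ContDiff ℝ (⊤ : ℕ∞) h)
    (hgrowth : ∀ k : ℕ, k ≤ 4 → ∃ (C : ℝ) (n : ℕ), ∀ z,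
      ‖iteratedFDeriv ℝ k h z‖ ≤ C * (1 + ‖z‖) ^ n) (u v : E) :
    HasPolyGrowth (mixedFlux h u v) := by
  have h₁ := HasPolyGrowth.dirDeriv hh (hgrowth 1 (by norm_num))
  exact ((HasPolyGrowth.const 2).mul ((h₁ v).mul
    (HasPolyGrowth.dirDeriv_dirDeriv hh (hgrowth 2 (by norm_num)) u v))).add
    (((h₁ v).mul (h₁ v)).mul (h₁ u))

/-- The mixed-block identity for a single pair of directions, in terms of `h = log g`. -/
theorem integral_mixedTransport_sub_integral_mixedWeight [FiniteDimensional ℝ E]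
    [MeasurableSpace E] [BorelSpace E] {μ : Measure E} [μ.IsAddHaarMeasure]
    (hh : ContDiff ℝ (⊤ : ℕ∞) h)
    (hgrowth : ∀ k : ℕ, k ≤ 4 → ∃ (C : ℝ) (n : ℕ), ∀ z,
      ‖iteratedFDeriv ℝ k h z‖ ≤ C * (1 + ‖z‖) ^ n)
    (hint : ∀ f : E → ℝ, HasPolyGrowth f → Integrable (fun z => exp (h z) * f z) μ) (u v : E) :
    2 * (∫ z, exp (h z) * mixedTransport h u v z ∂μ) - ∫ z, exp (h z) * mixedWeight h u v z ∂μ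
      = -2 * ∫ z, exp (h z) * dirDeriv u (dirDeriv v h) z ^ 2 ∂μ := by
  have iT := (hint _ (.mixedTransport hh hgrowth u v)).const_mul 2
  have iW := hint _ (.mixedWeight hh hgrowth u v)
  have iH := (hint _ (HasPolyGrowth.dirDeriv_dirDeriv hh
    (hgrowth 2 (by norm_num)) u v).sq).const_mul 2
  have hflux := funext (dirDeriv_exp_mul_mixedFlux hh u v)
  have hzero := integral_dirDeriv_eq_zero (μ := μ) (v := u) (hh.exp.mul (hh.mixedFlux u v))
    (hint _ (.mixedFlux hh hgrowth u v)) (hflux ▸ (iT.sub iW).add iH)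
  have hsplit := (integral_add' (iT.sub iW) iH).symm.trans (hflux ▸ hzero)
  rw [integral_sub' iT iW, integral_const_mul, integral_const_mul] at hsplit
  linarith

end MixedBlock

theorem sq_norm_le_sum_sq_add_sum_sq {d₁ d₂ : ℕ} (z : (Fin d₁ → ℝ) × (Fin d₂ → ℝ)) :
    ‖z‖ ^ 2 ≤ (∑ i, (z.1 i) ^ 2) + ∑ j, (z.2 j) ^ 2 := by
  have hpi : ∀ {d : ℕ} (x : Fin d → ℝ), ‖x‖ ≤ √(∑ i, x i ^ 2) := fun x =>
    (pi_norm_le_iff_of_nonneg (sqrt_nonneg _)).2 fun i => abs_le_sqrt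
      (Finset.single_le_sum (f := fun i => x i ^ 2) (fun _ _ => sq_nonneg _) (Finset.mem_univ i))
  have h₁ : 0 ≤ ∑ i, z.1 i ^ 2 := Finset.sum_nonneg fun _ _ => sq_nonneg _
  have h₂ : 0 ≤ ∑ j, z.2 j ^ 2 := Finset.sum_nonneg fun _ _ => sq_nonneg _
  refine (le_sqrt (norm_nonneg _) (add_nonneg h₁ h₂)).1 (max_le ?_ ?_)
  · exact (hpi z.1).trans (sqrt_le_sqrt (by linarith))
  · exact (hpi z.2).trans (sqrt_le_sqrt (by linarith))

/-- The mixed-block term in the proof of Fisher-information decay along the heat flow: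
`2∫ (∇_y g/g)·∇_y(Δ_x g) − ∫ (|∇_y g|²/g²)Δ_x g
  = −2∫ (1/g)‖∇_x∇_y g − (∇_x g ⊗ ∇_y g)/g‖_F² ≤ 0`. -/
theorem fisher_mixed_block_heat_flow
    {d₁ d₂ : ℕ} (hd₁ : 1 ≤ d₁) (hd₂ : 1 ≤ d₂)
    (g : (Fin d₁ → ℝ) × (Fin d₂ → ℝ) → ℝ)
    (hsmooth : ContDiff ℝ (⊤ : ℕ∞) g) (hpos : ∀ z, 0 < g z)
    (hGauss : ∃ c C β β' : ℝ, 0 < c ∧ c ≤ C ∧ 0 < β ∧ 0 < β' ∧ ∀ z,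
        c * Real.exp (-β * ((∑ i, (z.1 i) ^ 2) + ∑ j, (z.2 j) ^ 2)) ≤ g z ∧
        g z ≤ C * Real.exp (-β' * ((∑ i, (z.1 i) ^ 2) + ∑ j, (z.2 j) ^ 2)))
    (hPoly : ∀ k : ℕ, k ≤ 4 → ∃ C : ℝ, ∃ n : ℕ, ∀ z,
        ‖iteratedFDeriv ℝ k (fun w => Real.log (g w)) z‖ ≤ C * (1 + ‖z‖) ^ n) :
    2 * (∫ z, (∑ γ, pdy g z γ * pdy (lapx g) z γ) / g z)
      - (∫ z, ((∑ γ, (pdy g z γ) ^ 2) / (g z) ^ 2) * lapx g z)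
      = -2 * ∫ z, (1 / g z) *
          ∑ α, ∑ γ, (pdx (fun w => pdy g w γ) z α - pdx g z α * pdy g z γ / g z) ^ 2 ∧
    2 * (∫ z, (∑ γ, pdy g z γ * pdy (lapx g) z γ) / g z)
      - (∫ z, ((∑ γ, (pdy g z γ) ^ 2) / (g z) ^ 2) * lapx g z) ≤ 0 := by
  obtain ⟨c, C, β, b, -, -, -, hb, hG⟩ := hGauss
  obtain ⟨h, hh, rfl⟩ : ∃ h : (Fin d₁ → ℝ) × (Fin d₂ → ℝ) → ℝ,
      ContDiff ℝ (⊤ : ℕ∞) h ∧ g = fun z => exp (h z) :=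
    ⟨fun w => log (g w), hsmooth.log fun z => (hpos z).ne',
      funext fun z => (exp_log (hpos z)).symm⟩
  simp only [log_exp] at hPoly
  have hC : 0 ≤ C := by
    simpa using ((hpos 0).trans_le (hG 0).2).le
  have : (volume : Measure ((Fin d₁ → ℝ) × (Fin d₂ → ℝ))).IsAddHaarMeasure :=
    Measure.prod.instIsAddHaarMeasure _ _
  have hint : ∀ f : (Fin d₁ → ℝ) × (Fin d₂ → ℝ) → ℝ, HasPolyGrowth f →
      Integrable (fun z => exp (h z) * f z) := by
    refine fun f hf => hf.integrable_gaussian_mul (C := C) hsmooth.continuous hb fun z => ?_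
    rw [abs_of_pos (hpos z)]
    refine (hG z).2.trans ?_
    gcongr C * exp ?_
    nlinarith [sq_norm_le_sum_sq_add_sum_sq z]
  set U : Fin d₁ → (Fin d₁ → ℝ) × (Fin d₂ → ℝ) := fun i => (Pi.single i 1, 0)
  set V : Fin d₂ → (Fin d₁ → ℝ) × (Fin d₂ → ℝ) := fun j => (0, Pi.single j 1)
  have hne : ∀ z, exp (h z) ≠ 0 := fun z => (exp_pos _).ne'
  have hpdy : ∀ f z γ, pdy f z γ = dirDeriv (V γ) f z := fun _ _ _ => rfl
  have hlap : lapx (fun z => exp (h z))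
      = fun z => ∑ α, dirDeriv (U α) (dirDeriv (U α) fun w => exp (h w)) z := rfl
  have hT : ∀ z, (∑ γ, pdy (fun w => exp (h w)) z γ * pdy (lapx fun w => exp (h w)) z γ)
      / exp (h z) = ∑ γ, ∑ α, exp (h z) * mixedTransport h (U α) (V γ) z := by
    intro z
    rw [Finset.sum_div]
    refine Finset.sum_congr rfl fun γ _ => ?_
    rw [hpdy, hpdy, hlap, dirDeriv_sum _ fun α => (hh.exp.dirDeriv (U α)).dirDeriv (U α),
      dirDeriv_exp hh, Finset.mul_sum, Finset.sum_div]
    refine Finset.sum_congr rfl fun α _ => ?_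
    rw [dirDeriv_dirDeriv_dirDeriv_exp hh, mixedTransport, div_eq_iff (hne z)]
    ring
  have hW : ∀ z, (∑ γ, (pdy (fun w => exp (h w)) z γ) ^ 2) / exp (h z) ^ 2
      * lapx (fun w => exp (h w)) z
      = ∑ γ, ∑ α, exp (h z) * mixedWeight h (U α) (V γ) z := by
    intro z
    rw [hlap, Finset.sum_div, Finset.sum_mul]
    refine Finset.sum_congr rfl fun γ _ => ?_
    rw [Finset.mul_sum]
    refine Finset.sum_congr rfl fun α _ => ?_
    rw [hpdy, dirDeriv_exp hh, dirDeriv_dirDeriv_exp hh, mixedWeight]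
    have := hne z
    field_simp
  have hH : ∀ z, 1 / exp (h z) * ∑ α, ∑ γ, (pdx (fun w => pdy (fun w => exp (h w)) w γ) z α
      - pdx (fun w => exp (h w)) z α * pdy (fun w => exp (h w)) z γ / exp (h z)) ^ 2
      = ∑ γ, ∑ α, exp (h z) * dirDeriv (U α) (dirDeriv (V γ) h) z ^ 2 := by
    intro z
    rw [Finset.sum_comm, Finset.mul_sum]
    refine Finset.sum_congr rfl fun γ _ => ?_
    rw [Finset.mul_sum]
    refine Finset.sum_congr rfl fun α _ => ?_
    change 1 / exp (h z) * (dirDeriv (U α) (dirDeriv (V γ) fun w => exp (h w)) z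
      - dirDeriv (U α) (fun w => exp (h w)) z * dirDeriv (V γ) (fun w => exp (h w)) z
        / exp (h z)) ^ 2 = _
    rw [dirDeriv_dirDeriv_exp hh, dirDeriv_exp hh, dirDeriv_exp hh]
    have := hne z
    field_simp
    ring
  have hsum : ∀ f : Fin d₁ → Fin d₂ → (Fin d₁ → ℝ) × (Fin d₂ → ℝ) → ℝ,
      (∀ α γ, HasPolyGrowth (f α γ)) →
      ∫ z, ∑ γ, ∑ α, exp (h z) * f α γ z = ∑ γ, ∑ α, ∫ z, exp (h z) * f α γ z := by
    intro f hf
    rw [integral_finsetSum _ fun γ _ => integrable_finsetSum _ fun α _ => hint _ (hf α γ)]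
    exact Finset.sum_congr rfl fun γ _ => integral_finsetSum _ fun α _ => hint _ (hf α γ)
  have key : 2 * (∫ z, (∑ γ, pdy (fun w => exp (h w)) z γ * pdy (lapx fun w => exp (h w)) z γ)
        / exp (h z))
      - (∫ z, (∑ γ, (pdy (fun w => exp (h w)) z γ) ^ 2) / exp (h z) ^ 2
        * lapx (fun w => exp (h w)) z)
      = -2 * ∫ z, 1 / exp (h z) * ∑ α, ∑ γ, (pdx (fun w => pdy (fun w => exp (h w)) w γ) z α
        - pdx (fun w => exp (h w)) z α * pdy (fun w => exp (h w)) z γ / exp (h z)) ^ 2 := by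
    rw [funext hT, funext hW, funext hH,
      hsum (fun α γ => mixedTransport h (U α) (V γ)) fun α γ => .mixedTransport hh hPoly _ _,
      hsum (fun α γ => mixedWeight h (U α) (V γ)) fun α γ => .mixedWeight hh hPoly _ _,
      hsum (fun α γ z => dirDeriv (U α) (dirDeriv (V γ) h) z ^ 2) fun α γ =>
        (HasPolyGrowth.dirDeriv_dirDeriv hh (hPoly 2 (by norm_num)) _ _).sq]
    simp only [Finset.mul_sum, ← Finset.sum_sub_distrib]
    exact Finset.sum_congr rfl fun γ _ => Finset.sum_congr rfl fun α _ =>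
      integral_mixedTransport_sub_integral_mixedWeight hh hPoly hint (U α) (V γ)
  refine ⟨key, key.trans_le ?_⟩
  have hnonneg : 0 ≤ ∫ z, 1 / exp (h z) *
      ∑ α, ∑ γ, (pdx (fun w => pdy (fun w => exp (h w)) w γ) z α
        - pdx (fun w => exp (h w)) z α * pdy (fun w => exp (h w)) z γ / exp (h z)) ^ 2 :=
    integral_nonneg fun z => by positivity
  linarith
end
end

section
/- Let a : (0,∞) → [0,∞) be smooth and bounded with bounded first derivative, and let g : ℝ⁹ → ℝ, written g(u,v,w) with u,v,w ∈ ℝ³, be smooth, strictly positive with Gaussian-type bounds. Write Π = Π(u−v), η = ∇_u g − ∇_v g ∈ ℝ³, ξ = (∇_w g)/g ∈ ℝ³, and let M be the 3×3 matrix M_{αγ} = (∂_{u_α} − ∂_{v_α})∂_{w_γ} g. Then ∫_{ℝ⁹} (∇_w g/g)·∇_w( div_{u−v}[ a(|u−v|) Π (∇_u g − ∇_v g) ] ) du dv dw − (1/2)∫_{ℝ⁹} (|∇_w g|²/g²)· div_{u−v}[ a(|u−v|) Π (∇_u g − ∇_v g) ] du dv dw = −∫_{ℝ⁹} (a(|u−v|)/g)·‖ΠM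 − (Πη)⊗ξ‖_F² du dv dw ≤ 0. (The third-variable term Term_{k≠i≠j} in the proof of Fisher decay along the Landau–Kac flow.) -/
open MeasureTheory Real

noncomputable section

abbrev V3 := Fin 3 → ℝ
/-- ℝ⁹ written as triples (u, v, w) of points of ℝ³. -/
abbrev E9 := V3 × V3 × V3

/-- Squared Euclidean norm on ℝ³. -/
def sq3 (z : V3) : ℝ := ∑ α, (z α) ^ 2
/-- Euclidean norm on ℝ³. -/
def nrm3 (z : V3) : ℝ := Real.sqrt (sq3 z)
/-- Projection matrix `Π(z) = Id − z⊗z/|z|²`, entrywise. -/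
def proj (z : V3) (α β : Fin 3) : ℝ := (if α = β then (1:ℝ) else 0) - z α * z β / sq3 z

/-- Partial derivative in the `α`-th coordinate of `u`. -/
def pdu (g : E9 → ℝ) (z : E9) (α : Fin 3) : ℝ := fderiv ℝ g z (Pi.single α 1, 0, 0)
/-- Partial derivative in the `α`-th coordinate of `v`. -/
def pdvv (g : E9 → ℝ) (z : E9) (α : Fin 3) : ℝ := fderiv ℝ g z (0, Pi.single α 1, 0)
/-- Partial derivative in the `α`-th coordinate of `w`. -/
def pdw (g : E9 → ℝ) (z : E9) (α : Fin 3) : ℝ := fderiv ℝ g z (0, 0, Pi.single α 1)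

/-- The flux `a(|u−v|) Π(u−v) (∇_u g − ∇_v g)`, `α`-component. -/
def flux9 (a : ℝ → ℝ) (g : E9 → ℝ) (α : Fin 3) : E9 → ℝ := fun z =>
  a (nrm3 (z.1 - z.2.1)) * ∑ β, proj (z.1 - z.2.1) α β * (pdu g z β - pdvv g z β)

/-- `D = div_{u−v}[a(|u−v|) Π(u−v) (∇_u g − ∇_v g)]`. -/
def Dop9 (a : ℝ → ℝ) (g : E9 → ℝ) : E9 → ℝ := fun z =>
  ∑ α, (pdu (flux9 a g α) z α - pdvv (flux9 a g α) z α)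


instance isAddHaarMeasure_volume_E9 : (volume : Measure E9).IsAddHaarMeasure :=
  have : (volume : Measure (V3 × V3)).IsAddHaarMeasure :=
    Measure.prod.instIsAddHaarMeasure (volume : Measure V3) (volume : Measure V3)
  Measure.prod.instIsAddHaarMeasure (volume : Measure V3) (volume : Measure (V3 × V3))

/-- The direction along which `∂_{u_α} - ∂_{v_α}` differentiates. -/
def diffDir (α : Fin 3) : E9 := (Pi.single α 1, -Pi.single α 1, 0)

/-- The direction along which `∂_{w_γ}` differentiates. -/
def wDir (γ : Fin 3) : E9 := (0, 0, Pi.single γ 1)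

/-- The directional derivative of `f` along `x`. -/
def dirD (x : E9) (f : E9 → ℝ) : E9 → ℝ := fun z => fderiv ℝ f z x

lemma pdu_sub_pdvv (f : E9 → ℝ) (z : E9) (α : Fin 3) :
    pdu f z α - pdvv f z α = dirD (diffDir α) f z := by
  simp only [pdu, pdvv, dirD, diffDir]
  rw [← map_sub]
  simp

lemma pdw_eq_dirD (f : E9 → ℝ) (z : E9) (γ : Fin 3) : pdw f z γ = dirD (wDir γ) f z := rfl

lemma norm_diffDir_le (α : Fin 3) : ‖diffDir α‖ ≤ 1 := by
  simp [diffDir, Prod.norm_def, Pi.norm_single]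

lemma norm_wDir_le (γ : Fin 3) : ‖wDir γ‖ ≤ 1 := by
  simp [wDir, Prod.norm_def, Pi.norm_single]

lemma contDiff_dirD {f : E9 → ℝ} (hf : ContDiff ℝ (⊤ : ℕ∞) f) (x : E9) :
    ContDiff ℝ (⊤ : ℕ∞) (dirD x f) :=
  (hf.fderiv_right (m := (⊤ : ℕ∞)) (by simp)).clm_apply contDiff_const

lemma dirD_comm {f : E9 → ℝ} (hf : ContDiff ℝ (⊤ : ℕ∞) f) (x y z : E9) :
    dirD x (dirD y f) z = dirD y (dirD x f) z := by
  have hd : DifferentiableAt ℝ (fderiv ℝ f) z :=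
    (hf.fderiv_right (m := (⊤ : ℕ∞)) (by simp)).contDiffAt.differentiableAt (by simp)
  have h : IsSymmSndFDerivAt ℝ f z :=
    (hf.contDiffAt (x := z)).isSymmSndFDerivAt
      (by simpa using WithTop.coe_le_coe.mpr (le_top : (2 : ℕ∞) ≤ ⊤))
  have key : ∀ a b : E9, dirD a (dirD b f) z = fderiv ℝ (fderiv ℝ f) z a b := by
    intro a b
    unfold dirD
    rw [fderiv_clm_apply hd (differentiableAt_const b)]
    simp
  rw [key, key]
  exact h x y

lemma norm_iteratedFDeriv_dirD_le {f : E9 → ℝ} (hf : ContDiff ℝ (⊤ : ℕ∞) f) {x : E9}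
    (hx : ‖x‖ ≤ 1) (k : ℕ) (z : E9) :
    ‖iteratedFDeriv ℝ k (dirD x f) z‖ ≤ ‖iteratedFDeriv ℝ (k + 1) f z‖ := by
  have h1 : dirD x f = (ContinuousLinearMap.apply ℝ ℝ x) ∘ (fderiv ℝ f) := by
    ext y; simp [dirD]
  have h2 : ContDiff ℝ (⊤ : ℕ∞) (fderiv ℝ f) := hf.fderiv_right (m := (⊤ : ℕ∞)) (by simp)
  have h3 := (ContinuousLinearMap.apply ℝ ℝ x).norm_iteratedFDeriv_comp_left
    (h2.contDiffAt (x := z)) (n := k) (by exact_mod_cast le_top)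
  rw [← h1, norm_iteratedFDeriv_fderiv] at h3
  refine h3.trans ?_
  have h4 : ‖ContinuousLinearMap.apply ℝ ℝ x‖ ≤ 1 := by
    refine ContinuousLinearMap.opNorm_le_bound _ zero_le_one fun L => ?_
    simp only [ContinuousLinearMap.apply_apply, one_mul]
    exact (L.le_opNorm x).trans (mul_le_of_le_one_right (norm_nonneg _) hx)
  exact mul_le_of_le_one_left (norm_nonneg _) h4

lemma dirD_const (c : ℝ) (x z : E9) : dirD x (fun _ => c) z = 0 := by simp [dirD]

lemma dirD_add {f h : E9 → ℝ} {z : E9} (hf : DifferentiableAt ℝ f z)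
    (hh : DifferentiableAt ℝ h z) (x : E9) :
    dirD x (fun y => f y + h y) z = dirD x f z + dirD x h z := by
  simp [dirD, fderiv_fun_add hf hh]

lemma dirD_mul {f h : E9 → ℝ} {z : E9} (hf : DifferentiableAt ℝ f z)
    (hh : DifferentiableAt ℝ h z) (x : E9) :
    dirD x (fun y => f y * h y) z = dirD x f z * h z + f z * dirD x h z := by
  simp only [dirD]
  rw [fderiv_fun_mul hf hh]
  simp
  ring

lemma dirD_sum {ι : Type*} (s : Finset ι) {f : ι → E9 → ℝ} {z : E9}
    (hf : ∀ i ∈ s, DifferentiableAt ℝ (f i) z) (x : E9) :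
    dirD x (fun y => ∑ i ∈ s, f i y) z = ∑ i ∈ s, dirD x (f i) z := by
  simp only [dirD]
  rw [fderiv_fun_sum hf]
  simp

lemma dirD_congr {f h : E9 → ℝ} {z : E9} (hfh : f =ᶠ[nhds z] h) (x : E9) :
    dirD x f z = dirD x h z := by
  simp only [dirD, hfh.fderiv_eq]

/-- The derivative vanishes along a direction in which the function is translation invariant. -/
lemma dirD_eq_zero_of_invariant {f : E9 → ℝ} {z x : E9} (hf : DifferentiableAt ℝ f z)
    (h : ∀ t : ℝ, f (z + t • x) = f z) : dirD x f z = 0 := by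
  simp only [dirD]
  rw [← hf.lineDeriv_eq_fderiv, lineDeriv]
  simp [h]

/-- `|u - v|²` as a function on `ℝ⁹`. -/
def relSq (z : E9) : ℝ := sq3 (z.1 - z.2.1)

lemma sq3_pos {x : V3} (hx : x ≠ 0) : 0 < sq3 x := by
  obtain ⟨i, hi⟩ := Function.ne_iff.mp hx
  exact Finset.sum_pos' (fun j _ => sq_nonneg _) ⟨i, Finset.mem_univ _, by
    have : x i ≠ 0 := hi
    positivity⟩

lemma relSq_pos {z : E9} (hz : z.1 ≠ z.2.1) : 0 < relSq z := sq3_pos (sub_ne_zero.mpr hz)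

lemma contDiff_coord (β : Fin 3) : ContDiff ℝ (⊤ : ℕ∞) (fun z : E9 => z.1 β - z.2.1 β) := by
  fun_prop

lemma contDiff_relSq : ContDiff ℝ (⊤ : ℕ∞) relSq := by
  have : relSq = fun z : E9 => ∑ β, (z.1 β - z.2.1 β) ^ 2 := by ext z; simp [relSq, sq3]
  rw [this]
  exact ContDiff.sum fun β _ => (contDiff_coord β).pow 2

lemma dirD_coord (α β : Fin 3) (z : E9) :
    dirD (diffDir α) (fun z : E9 => z.1 β - z.2.1 β) z = if α = β then 2 else 0 := by
  have h : HasFDerivAt (fun z : E9 => z.1 β - z.2.1 β)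
      ((ContinuousLinearMap.proj β).comp (ContinuousLinearMap.fst ℝ V3 (V3 × V3)) -
        (ContinuousLinearMap.proj β).comp ((ContinuousLinearMap.fst ℝ V3 V3).comp
          (ContinuousLinearMap.snd ℝ V3 (V3 × V3)))) z :=
    ((ContinuousLinearMap.proj (R := ℝ) (φ := fun _ : Fin 3 => ℝ) β).comp
        (ContinuousLinearMap.fst ℝ V3 (V3 × V3)) -
      (ContinuousLinearMap.proj (R := ℝ) (φ := fun _ : Fin 3 => ℝ) β).comp
        ((ContinuousLinearMap.fst ℝ V3 V3).comp
          (ContinuousLinearMap.snd ℝ V3 (V3 × V3)))).hasFDerivAt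
  simp only [dirD, h.fderiv]
  by_cases hab : α = β
  · subst hab; simp [diffDir]; norm_num
  · simp [diffDir, hab, Ne.symm hab]

lemma dirD_relSq (α : Fin 3) (z : E9) :
    dirD (diffDir α) relSq z = 4 * (z.1 α - z.2.1 α) := by
  have : relSq = fun z : E9 => ∑ β, (z.1 β - z.2.1 β) * (z.1 β - z.2.1 β) := by
    ext z; simp [relSq, sq3, sq]
  have hd : ∀ β, DifferentiableAt ℝ (fun z : E9 => z.1 β - z.2.1 β) z := fun β =>
    (contDiff_coord β).contDiffAt.differentiableAt (by simp)
  rw [this, dirD_sum _ fun β _ => (hd β).fun_mul (hd β)]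
  simp only [dirD_mul (hd _) (hd _), dirD_coord]
  simp [Finset.sum_add_distrib]
  ring

lemma dirD_comp {b : ℝ → ℝ} {f : E9 → ℝ} {z : E9} (hb : DifferentiableAt ℝ b (f z))
    (hf : DifferentiableAt ℝ f z) (x : E9) :
    dirD x (fun y => b (f y)) z = deriv b (f z) * dirD x f z := by
  have := hb.hasDerivAt.comp_hasFDerivAt z hf.hasFDerivAt
  have h2 : fderiv ℝ (fun y => b (f y)) z = deriv b (f z) • fderiv ℝ f z := this.fderiv
  simp [dirD, h2]

/-- The matrix `a(|u - v|) Π(u - v)`. -/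
def landauKernel (a : ℝ → ℝ) (α β : Fin 3) (z : E9) : ℝ :=
  a (nrm3 (z.1 - z.2.1)) * proj (z.1 - z.2.1) α β

/-- The divergence of the rows of `a(|u - v|) Π(u - v)`. -/
def landauDrift (a : ℝ → ℝ) (β : Fin 3) (z : E9) : ℝ :=
  -4 * (a (nrm3 (z.1 - z.2.1)) * (z.1 β - z.2.1 β) / relSq z)

lemma flux9_eq (a : ℝ → ℝ) (h : E9 → ℝ) (α : Fin 3) :
    flux9 a h α = fun z => ∑ β, landauKernel a α β z * dirD (diffDir β) h z := by
  ext z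
  simp only [flux9, landauKernel, pdu_sub_pdvv, Finset.mul_sum, mul_assoc]

lemma Dop9_eq (a : ℝ → ℝ) (h : E9 → ℝ) (z : E9) :
    Dop9 a h z = ∑ α, dirD (diffDir α) (flux9 a h α) z := by
  simp only [Dop9, pdu_sub_pdvv]

lemma isOpen_offDiag : IsOpen {z : E9 | z.1 ≠ z.2.1} :=
  isOpen_ne_fun continuous_fst (continuous_fst.comp continuous_snd)

section Kernel

variable {a : ℝ → ℝ}

lemma contDiffAt_comp_sqrt (ha : ContDiffOn ℝ (⊤ : ℕ∞) a (Set.Ioi 0)) {s : ℝ} (hs : 0 < s) :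
    ContDiffAt ℝ (⊤ : ℕ∞) (fun s => a (Real.sqrt s)) s :=
  ContDiffAt.comp s (ha.contDiffAt (Ioi_mem_nhds (Real.sqrt_pos.mpr hs)))
    (Real.contDiffAt_sqrt hs.ne')

lemma contDiffAt_amplitude (ha : ContDiffOn ℝ (⊤ : ℕ∞) a (Set.Ioi 0)) {z : E9}
    (hz : z.1 ≠ z.2.1) : ContDiffAt ℝ (⊤ : ℕ∞) (fun z : E9 => a (nrm3 (z.1 - z.2.1))) z :=
  ContDiffAt.comp (g := fun s => a (Real.sqrt s)) (f := relSq) z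
    (contDiffAt_comp_sqrt ha (relSq_pos hz)) contDiff_relSq.contDiffAt

lemma contDiffAt_landauKernel (ha : ContDiffOn ℝ (⊤ : ℕ∞) a (Set.Ioi 0)) {z : E9}
    (hz : z.1 ≠ z.2.1) (α β : Fin 3) : ContDiffAt ℝ (⊤ : ℕ∞) (landauKernel a α β) z :=
  (contDiffAt_amplitude ha hz).mul (contDiffAt_const.sub
    (((contDiff_coord α).mul (contDiff_coord β)).contDiffAt.div contDiff_relSq.contDiffAt
      (relSq_pos hz).ne'))

lemma contDiffAt_landauDrift (ha : ContDiffOn ℝ (⊤ : ℕ∞) a (Set.Ioi 0)) {z : E9}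
    (hz : z.1 ≠ z.2.1) (β : Fin 3) : ContDiffAt ℝ (⊤ : ℕ∞) (landauDrift a β) z :=
  contDiffAt_const.mul (((contDiffAt_amplitude ha hz).mul (contDiff_coord β).contDiffAt).div
    contDiff_relSq.contDiffAt (relSq_pos hz).ne')

lemma sum_dirD_landauKernel (ha : ContDiffOn ℝ (⊤ : ℕ∞) a (Set.Ioi 0)) {z : E9}
    (hz : z.1 ≠ z.2.1) (β : Fin 3) :
    ∑ α, dirD (diffDir α) (landauKernel a α β) z = landauDrift a β z := by
  have hs := relSq_pos hz
  set b : ℝ → ℝ := fun s => a (Real.sqrt s) with hb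
  have hbd : DifferentiableAt ℝ b (relSq z) :=
    (contDiffAt_comp_sqrt ha hs).differentiableAt (by simp)
  have hcd : DifferentiableAt ℝ (fun s => b s / s) (relSq z) := hbd.div differentiableAt_id hs.ne'
  have hSd : DifferentiableAt ℝ relSq z := contDiff_relSq.contDiffAt.differentiableAt (by simp)
  have hd : ∀ β, DifferentiableAt ℝ (fun z : E9 => z.1 β - z.2.1 β) z := fun β =>
    (contDiff_coord β).contDiffAt.differentiableAt (by simp)
  have hcS : DifferentiableAt ℝ (fun y => b (relSq y) / relSq y) z := hcd.comp z hSd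
  have hbS : DifferentiableAt ℝ (fun y => b (relSq y)) z := hbd.comp z hSd
  have hdc : deriv (fun s => b s / s) (relSq z)
      = (deriv b (relSq z) * relSq z - b (relSq z)) / relSq z ^ 2 := by
    rw [deriv_fun_div hbd differentiableAt_fun_id hs.ne']; simp
  have key : ∀ α, dirD (diffDir α) (landauKernel a α β) z =
      deriv b (relSq z) * (4 * (z.1 α - z.2.1 α)) * (if α = β then 1 else 0)
      - (deriv (fun s => b s / s) (relSq z) * (4 * (z.1 α - z.2.1 α))
          * ((z.1 α - z.2.1 α) * (z.1 β - z.2.1 β))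
        + b (relSq z) / relSq z * (2 * (z.1 β - z.2.1 β)
          + (z.1 α - z.2.1 α) * (if α = β then 2 else 0))) := by
    intro α
    have h1 : landauKernel a α β = fun y => b (relSq y) * (if α = β then 1 else 0)
        + (-1) * (b (relSq y) / relSq y * ((y.1 α - y.2.1 α) * (y.1 β - y.2.1 β))) := by
      ext y
      simp only [landauKernel, proj, hb, nrm3, relSq, Pi.sub_apply]
      ring
    have hm := hcS.fun_mul ((hd α).fun_mul (hd β))
    rw [h1, dirD_add (hbS.fun_mul (differentiableAt_const _)) ((differentiableAt_const _).fun_mul hm),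
      dirD_mul hbS (differentiableAt_const _), dirD_mul (differentiableAt_const _) hm,
      dirD_mul hcS ((hd α).fun_mul (hd β)), dirD_mul (hd α) (hd β), dirD_const, dirD_const,
      dirD_comp hbd hSd, dirD_comp (b := fun s => b s / s) hcd hSd, dirD_relSq, dirD_coord,
      dirD_coord]
    simp
    ring
  have hsum : relSq z = ∑ α, (z.1 α - z.2.1 α) ^ 2 := by simp [relSq, sq3]
  simp only [key, hdc, landauDrift]
  have hb' : a (nrm3 (z.1 - z.2.1)) = b (relSq z) := rfl
  rw [hb']
  generalize b (relSq z) = B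
  generalize deriv b (relSq z) = B'
  have hs' : relSq z ≠ 0 := hs.ne'
  have h4 : ∀ x : Fin 3, (B' * relSq z - B) / relSq z ^ 2 * (4 * (z.1 x - z.2.1 x)) *
      ((z.1 x - z.2.1 x) * (z.1 β - z.2.1 β)) = (z.1 x - z.2.1 x) ^ 2 *
      ((B' * relSq z - B) / relSq z ^ 2 * 4 * (z.1 β - z.2.1 β)) := by intro x; ring
  simp only [h4, Finset.sum_sub_distrib, Finset.sum_add_distrib, ← Finset.sum_mul,
    ← Finset.mul_sum, ← hsum]
  simp
  field_simp
  ring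

lemma contDiffAt_flux9 (ha : ContDiffOn ℝ (⊤ : ℕ∞) a (Set.Ioi 0)) {h : E9 → ℝ}
    (hh : ContDiff ℝ (⊤ : ℕ∞) h) {z : E9} (hz : z.1 ≠ z.2.1) (α : Fin 3) :
    ContDiffAt ℝ (⊤ : ℕ∞) (flux9 a h α) z := by
  rw [flux9_eq]
  exact ContDiffAt.sum fun β _ =>
    (contDiffAt_landauKernel ha hz α β).mul (contDiff_dirD hh _).contDiffAt

lemma Dop9_eq_of_ne (ha : ContDiffOn ℝ (⊤ : ℕ∞) a (Set.Ioi 0)) {h : E9 → ℝ}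
    (hh : ContDiff ℝ (⊤ : ℕ∞) h) {z : E9} (hz : z.1 ≠ z.2.1) :
    Dop9 a h z = (∑ β, landauDrift a β z * dirD (diffDir β) h z)
      + ∑ β, ∑ α, landauKernel a α β z * dirD (diffDir α) (dirD (diffDir β) h) z := by
  have hk := fun α β => (contDiffAt_landauKernel ha hz α β).differentiableAt (by simp)
  have hd := fun x => (contDiff_dirD hh x).contDiffAt (x := z) |>.differentiableAt (by simp)
  simp only [Dop9_eq, flux9_eq]
  simp only [dirD_sum Finset.univ (fun β _ => (hk _ β).fun_mul (hd (diffDir β))),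
    dirD_mul (hk _ _) (hd _), ← sum_dirD_landauKernel ha hz]
  rw [Finset.sum_comm]
  simp only [Finset.sum_add_distrib, Finset.sum_mul]

lemma dirD_wDir_eq_zero {f : E9 → ℝ} {z : E9} (hf : DifferentiableAt ℝ f z)
    (h : ∀ u v w w', f (u, v, w) = f (u, v, w')) (γ : Fin 3) : dirD (wDir γ) f z = 0 := by
  refine dirD_eq_zero_of_invariant hf fun t => ?_
  obtain ⟨u, v, w⟩ := z
  simp only [wDir, Prod.smul_mk, Prod.mk_add_mk, smul_zero, add_zero]
  exact h _ _ _ _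

/-- The operator `Dop9` has coefficients independent of `w`, so it commutes with `∂_{w_γ}`. -/
lemma pdw_Dop9 (ha : ContDiffOn ℝ (⊤ : ℕ∞) a (Set.Ioi 0)) {h : E9 → ℝ}
    (hh : ContDiff ℝ (⊤ : ℕ∞) h) {z : E9} (hz : z.1 ≠ z.2.1) (γ : Fin 3) :
    pdw (Dop9 a h) z γ = Dop9 a (dirD (wDir γ) h) z := by
  have hk := fun α β => (contDiffAt_landauKernel ha hz α β).differentiableAt (by simp)
  have hl := fun β => (contDiffAt_landauDrift ha hz β).differentiableAt (by simp)
  have hd := fun x => (contDiff_dirD hh x).contDiffAt (x := z) |>.differentiableAt (by simp)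
  have hd2 := fun x y => (contDiff_dirD (contDiff_dirD hh x) y).contDiffAt (x := z)
    |>.differentiableAt (by simp)
  have hev : Dop9 a h =ᶠ[nhds z] fun z =>
      (∑ β, (landauDrift a β z * dirD (diffDir β) h z
      + ∑ α, landauKernel a α β z * dirD (diffDir α) (dirD (diffDir β) h) z)) := by
    filter_upwards [isOpen_offDiag.mem_nhds hz] with y hy
    rw [Dop9_eq_of_ne ha hh hy, Finset.sum_add_distrib]
  have hkw : ∀ α β, dirD (wDir γ) (landauKernel a α β) z = 0 := fun α β =>
    dirD_wDir_eq_zero (hk α β) (fun _ _ _ _ => rfl) γ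
  have hlw : ∀ β, dirD (wDir γ) (landauDrift a β) z = 0 := fun β =>
    dirD_wDir_eq_zero (hl β) (fun _ _ _ _ => rfl) γ
  have hs : ∀ β, DifferentiableAt ℝ (fun z => ∑ α, landauKernel a α β z *
      dirD (diffDir α) (dirD (diffDir β) h) z) z := fun β =>
    DifferentiableAt.fun_sum fun α _ => (hk α β).fun_mul (hd2 _ _)
  rw [pdw_eq_dirD, dirD_congr hev, dirD_sum _ fun β _ => ((hl β).fun_mul (hd _)).fun_add (hs β),
    Dop9_eq_of_ne ha (contDiff_dirD hh _) hz, ← Finset.sum_add_distrib]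
  refine Finset.sum_congr rfl fun β _ => ?_
  rw [dirD_add ((hl β).fun_mul (hd _)) (hs β), dirD_mul (hl β) (hd _),
    dirD_sum _ fun α _ => (hk α β).fun_mul (hd2 _ _), hlw, dirD_comm hh]
  congr 1
  · ring
  · refine Finset.sum_congr rfl fun α _ => ?_
    rw [dirD_mul (hk α β) (hd2 _ _), hkw, dirD_comm (contDiff_dirD hh _)]
    have : dirD (wDir γ) (dirD (diffDir β) h) = dirD (diffDir β) (dirD (wDir γ) h) :=
      funext fun y => dirD_comm hh _ _ y
    rw [this]
    ring

lemma sum_coord_sq (z : E9) :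
    ∑ α, (z.1 α - z.2.1 α) * (z.1 α - z.2.1 α) = relSq z := by simp [relSq, sq3, sq]

/-- The range of `Π(u - v)` is orthogonal to `u - v`. -/
lemma sum_landauKernel_mul_coord {z : E9} (hz : z.1 ≠ z.2.1) (β : Fin 3) :
    ∑ α, landauKernel a α β z * (z.1 α - z.2.1 α) = 0 := by
  have hs := (relSq_pos hz).ne'
  have h1 : ∀ α, landauKernel a α β z * (z.1 α - z.2.1 α) =
      a (nrm3 (z.1 - z.2.1)) * ((if α = β then z.1 α - z.2.1 α else 0)
        - (z.1 α - z.2.1 α) * (z.1 α - z.2.1 α) * ((z.1 β - z.2.1 β) / relSq z)) := by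
    intro α
    simp only [landauKernel, proj, Pi.sub_apply, relSq]
    split_ifs <;> ring
  simp only [h1, ← Finset.mul_sum, Finset.sum_sub_distrib, ← Finset.sum_mul, sum_coord_sq]
  simp
  field_simp
  simp

/-- `Π` is an orthogonal projection: `⟨y, Π y⟩ = |Π y|²`. -/
lemma sum_mul_proj {x : V3} (hx : x ≠ 0) (y : V3) :
    ∑ α, y α * ∑ β, proj x α β * y β = ∑ α, (∑ β, proj x α β * y β) ^ 2 := by
  have hs : sq3 x ≠ 0 := (sq3_pos hx).ne'
  have hP : ∀ α, ∑ β, proj x α β * y β = y α - x α * ((∑ β, x β * y β) / sq3 x) := by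
    intro α
    simp only [proj, sub_mul, Finset.sum_sub_distrib, Finset.sum_div, Finset.mul_sum]
    congr 1
    · simp
    · exact Finset.sum_congr rfl fun β _ => by ring
  simp only [hP]
  generalize hT : (∑ β, x β * y β) / sq3 x = T
  have hT' : ∑ β, x β * y β = T * sq3 x := by rw [← hT]; field_simp
  have h1 : ∀ α, (y α - x α * T) ^ 2 =
      y α * (y α - x α * T) - T * (x α * y α) + T ^ 2 * (x α) ^ 2 := fun α => by ring
  simp only [h1, Finset.sum_add_distrib, Finset.sum_sub_distrib, ← Finset.mul_sum, hT']
  simp only [sq3]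
  ring

end Kernel

section Divergence

variable {a : ℝ → ℝ} {g : E9 → ℝ}

/-- The logarithmic derivative `ξ_γ = ∂_{w_γ} g / g`. -/
def logGradW (g : E9 → ℝ) (γ : Fin 3) (z : E9) : ℝ := dirD (wDir γ) g z / g z

/-- The vector field whose divergence is the difference of the two sides. -/
def fisherField (a : ℝ → ℝ) (g : E9 → ℝ) (α : Fin 3) (z : E9) : ℝ :=
  ∑ γ, (logGradW g γ z * flux9 a (dirD (wDir γ) g) α z
    + (-1 / 2) * (logGradW g γ z * logGradW g γ z * flux9 a g α z))

/-- The dissipation density `(a / g) ‖ΠM - (Πη) ⊗ ξ‖²`. -/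
def dissipation (a : ℝ → ℝ) (g : E9 → ℝ) (z : E9) : ℝ :=
  (a (nrm3 (z.1 - z.2.1)) / g z) * ∑ α, ∑ γ,
    ((∑ β, proj (z.1 - z.2.1) α β * dirD (diffDir β) (dirD (wDir γ) g) z)
      - (∑ β, proj (z.1 - z.2.1) α β * dirD (diffDir β) g z) * logGradW g γ z) ^ 2

lemma contDiff_logGradW (hg : ContDiff ℝ (⊤ : ℕ∞) g) (hpos : ∀ z, 0 < g z) (γ : Fin 3) :
    ContDiff ℝ (⊤ : ℕ∞) (logGradW g γ) :=
  (contDiff_dirD hg _).div hg fun z => (hpos z).ne'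

lemma dirD_logGradW (hg : ContDiff ℝ (⊤ : ℕ∞) g) (hpos : ∀ z, 0 < g z) (γ : Fin 3) (x z : E9) :
    dirD x (logGradW g γ) z
      = (dirD x (dirD (wDir γ) g) z - dirD x g z * logGradW g γ z) / g z := by
  have hd : DifferentiableAt ℝ (dirD (wDir γ) g) z :=
    (contDiff_dirD hg _).contDiffAt.differentiableAt (by simp)
  have hd' : DifferentiableAt ℝ g z := hg.contDiffAt.differentiableAt (by simp)
  have hl : DifferentiableAt ℝ (logGradW g γ) z :=
    (contDiff_logGradW hg hpos γ).contDiffAt.differentiableAt (by simp)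
  have h1 : dirD (wDir γ) g = fun y => logGradW g γ y * g y := by
    ext y
    have := (hpos y).ne'
    simp only [logGradW]
    field_simp
  have h2 := dirD_mul hl hd' x
  rw [← h1] at h2
  have := (hpos z).ne'
  rw [h2]
  field_simp
  ring

lemma contDiffAt_fisherField (ha : ContDiffOn ℝ (⊤ : ℕ∞) a (Set.Ioi 0))
    (hg : ContDiff ℝ (⊤ : ℕ∞) g) (hpos : ∀ z, 0 < g z) {z : E9} (hz : z.1 ≠ z.2.1) (α : Fin 3) :
    ContDiffAt ℝ (⊤ : ℕ∞) (fisherField a g α) z := by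
  have hl := fun γ => (contDiff_logGradW hg hpos γ).contDiffAt (x := z)
  exact ContDiffAt.sum fun γ _ =>
    ((hl γ).mul (contDiffAt_flux9 ha (contDiff_dirD hg _) hz α)).add
      (contDiffAt_const.mul (((hl γ).mul (hl γ)).mul (contDiffAt_flux9 ha hg hz α)))

lemma sum_flux9_mul_coord (h : E9 → ℝ) {z : E9} (hz : z.1 ≠ z.2.1) :
    ∑ α, flux9 a h α z * (z.1 α - z.2.1 α) = 0 := by
  simp only [flux9_eq, Finset.sum_mul]
  rw [Finset.sum_comm]
  have : ∀ β, ∑ α, landauKernel a α β z * dirD (diffDir β) h z * (z.1 α - z.2.1 α)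
      = dirD (diffDir β) h z * ∑ α, landauKernel a α β z * (z.1 α - z.2.1 α) := by
    intro β
    rw [Finset.mul_sum]
    exact Finset.sum_congr rfl fun α _ => by ring
  simp [this, sum_landauKernel_mul_coord hz]

/-- The field is tangent to the spheres `|u - v| = const`. -/
lemma sum_fisherField_mul_coord {z : E9} (hz : z.1 ≠ z.2.1) :
    ∑ α, fisherField a g α z * (z.1 α - z.2.1 α) = 0 := by
  simp only [fisherField, Finset.sum_mul]
  rw [Finset.sum_comm]
  refine Finset.sum_eq_zero fun γ _ => ?_
  have : ∀ α, (logGradW g γ z * flux9 a (dirD (wDir γ) g) α z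
      + (-1 / 2) * (logGradW g γ z * logGradW g γ z * flux9 a g α z)) * (z.1 α - z.2.1 α)
      = logGradW g γ z * (flux9 a (dirD (wDir γ) g) α z * (z.1 α - z.2.1 α))
      + (-1 / 2) * (logGradW g γ z * logGradW g γ z) * (flux9 a g α z * (z.1 α - z.2.1 α)) :=
    fun α => by ring
  simp only [this, Finset.sum_add_distrib, ← Finset.mul_sum, sum_flux9_mul_coord _ hz]
  simp

lemma dissipation_eq {z : E9} (hz : z.1 ≠ z.2.1) (hg : ContDiff ℝ (⊤ : ℕ∞) g)
    (hpos : ∀ z, 0 < g z) :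
    dissipation a g z = ∑ γ, ∑ α, dirD (diffDir α) (logGradW g γ) z *
      (flux9 a (dirD (wDir γ) g) α z - logGradW g γ z * flux9 a g α z) := by
  have hx : z.1 - z.2.1 ≠ 0 := sub_ne_zero.mpr hz
  rw [dissipation, Finset.sum_comm, Finset.mul_sum]
  refine Finset.sum_congr rfl fun γ _ => ?_
  set y : V3 := fun β => dirD (diffDir β) (dirD (wDir γ) g) z
    - dirD (diffDir β) g z * logGradW g γ z with hy
  have h1 : ∀ α, (∑ β, proj (z.1 - z.2.1) α β * dirD (diffDir β) (dirD (wDir γ) g) z)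
      - (∑ β, proj (z.1 - z.2.1) α β * dirD (diffDir β) g z) * logGradW g γ z
      = ∑ β, proj (z.1 - z.2.1) α β * y β := by
    intro α
    rw [Finset.sum_mul, ← Finset.sum_sub_distrib]
    exact Finset.sum_congr rfl fun β _ => by simp only [hy]; ring
  have h2 : ∀ α, flux9 a (dirD (wDir γ) g) α z - logGradW g γ z * flux9 a g α z
      = a (nrm3 (z.1 - z.2.1)) * ∑ β, proj (z.1 - z.2.1) α β * y β := by
    intro α
    rw [← h1 α]
    simp only [flux9, pdu_sub_pdvv]
    ring
  simp only [h1, h2, ← sum_mul_proj hx y, dirD_logGradW hg hpos]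
  rw [Finset.mul_sum]
  refine Finset.sum_congr rfl fun α _ => ?_
  have : y α = dirD (diffDir α) (dirD (wDir γ) g) z
    - dirD (diffDir α) g z * logGradW g γ z := rfl
  rw [← this]
  ring

/-- The divergence of `fisherField`. -/
lemma sum_dirD_fisherField (ha : ContDiffOn ℝ (⊤ : ℕ∞) a (Set.Ioi 0))
    (hg : ContDiff ℝ (⊤ : ℕ∞) g) (hpos : ∀ z, 0 < g z) {z : E9} (hz : z.1 ≠ z.2.1) :
    ∑ α, dirD (diffDir α) (fisherField a g α) z =
      (∑ γ, logGradW g γ z * Dop9 a (dirD (wDir γ) g) z)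
      - 1 / 2 * ((∑ γ, logGradW g γ z ^ 2) * Dop9 a g z) + dissipation a g z := by
  have hl := fun γ => (contDiff_logGradW hg hpos γ).contDiffAt (x := z)
    |>.differentiableAt (by simp)
  have hf := fun α => (contDiffAt_flux9 ha hg hz α).differentiableAt (by simp)
  have hfw := fun γ α => (contDiffAt_flux9 ha (contDiff_dirD hg (wDir γ)) hz α)
    |>.differentiableAt (by simp)
  have h1 : ∀ α γ, DifferentiableAt ℝ (fun z => logGradW g γ z * flux9 a (dirD (wDir γ) g) α z) z :=
    fun α γ => (hl γ).fun_mul (hfw γ α)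
  have h2 : ∀ α γ, DifferentiableAt ℝ
      (fun z => logGradW g γ z * logGradW g γ z * flux9 a g α z) z :=
    fun α γ => ((hl γ).fun_mul (hl γ)).fun_mul (hf α)
  have h3 : ∀ α γ, DifferentiableAt ℝ
      (fun z => (-1 / 2) * (logGradW g γ z * logGradW g γ z * flux9 a g α z)) z :=
    fun α γ => (differentiableAt_const _).fun_mul (h2 α γ)
  have key : ∀ α, dirD (diffDir α) (fisherField a g α) z = ∑ γ,
      (logGradW g γ z * dirD (diffDir α) (flux9 a (dirD (wDir γ) g) α) z
      - 1 / 2 * (logGradW g γ z ^ 2 * dirD (diffDir α) (flux9 a g α) z)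
      + dirD (diffDir α) (logGradW g γ) z *
      (flux9 a (dirD (wDir γ) g) α z - logGradW g γ z * flux9 a g α z)) := by
    intro α
    have : fisherField a g α = fun z => ∑ γ, (logGradW g γ z * flux9 a (dirD (wDir γ) g) α z
      + (-1 / 2) * (logGradW g γ z * logGradW g γ z * flux9 a g α z)) := rfl
    rw [this, dirD_sum _ fun γ _ => (h1 α γ).fun_add (h3 α γ)]
    refine Finset.sum_congr rfl fun γ _ => ?_
    rw [dirD_add (h1 α γ) (h3 α γ), dirD_mul (hl γ) (hfw γ α),
      dirD_mul (differentiableAt_const _) (h2 α γ), dirD_mul ((hl γ).fun_mul (hl γ)) (hf α),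
      dirD_mul (hl γ) (hl γ), dirD_const]
    ring
  simp only [key]
  rw [Finset.sum_comm, dissipation_eq hz hg hpos]
  simp only [Dop9_eq, Finset.sum_add_distrib, Finset.sum_sub_distrib, Finset.mul_sum,
    Finset.sum_mul]
  congr 2
  rw [Finset.sum_comm]

end Divergence

section Cutoff

/-- A smooth cutoff equal to `1` on `s ≤ n + 1` and to `0` on `2 (n + 1) ≤ s`. -/
def outerCutoff (n : ℕ) (s : ℝ) : ℝ := Real.smoothTransition (2 - s / (n + 1))

/-- A smooth cutoff vanishing near `0` and equal to `1` on `2 / (n + 1) ≤ s`. -/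
def innerCutoff (n : ℕ) (s : ℝ) : ℝ := Real.smoothTransition ((n + 1) * s - 1)

/-- A smooth compactly supported cutoff vanishing near the diagonal `u = v`, whose gradient along
the directions `diffDir` is parallel to `u - v`. -/
def cutoff9 (n : ℕ) (z : E9) : ℝ :=
  innerCutoff n (relSq z) * outerCutoff n (relSq z) *
    (outerCutoff n (sq3 (z.1 + z.2.1)) * outerCutoff n (sq3 z.2.2))

lemma contDiff_outerCutoff (n : ℕ) : ContDiff ℝ (⊤ : ℕ∞) (outerCutoff n) :=
  Real.smoothTransition.contDiff.comp (contDiff_const.sub (contDiff_id.div_const _))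

lemma contDiff_innerCutoff (n : ℕ) : ContDiff ℝ (⊤ : ℕ∞) (innerCutoff n) :=
  Real.smoothTransition.contDiff.comp ((contDiff_const.mul contDiff_id).sub contDiff_const)

lemma contDiff_sq3 : ContDiff ℝ (⊤ : ℕ∞) sq3 := by
  unfold sq3
  fun_prop

lemma contDiff_cutoff9_factor (n : ℕ) : ContDiff ℝ (⊤ : ℕ∞)
    (fun z : E9 => outerCutoff n (sq3 (z.1 + z.2.1)) * outerCutoff n (sq3 z.2.2)) :=
  ((contDiff_outerCutoff n).comp (contDiff_sq3.comp
    (contDiff_fst.add (contDiff_fst.comp contDiff_snd)))).mul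
    ((contDiff_outerCutoff n).comp (contDiff_sq3.comp (contDiff_snd.comp contDiff_snd)))

lemma contDiff_cutoff9 (n : ℕ) : ContDiff ℝ (⊤ : ℕ∞) (cutoff9 n) :=
  (((contDiff_innerCutoff n).comp contDiff_relSq).mul
    ((contDiff_outerCutoff n).comp contDiff_relSq)).mul (contDiff_cutoff9_factor n)

lemma outerCutoff_mem (n : ℕ) (s : ℝ) : 0 ≤ outerCutoff n s ∧ outerCutoff n s ≤ 1 :=
  ⟨Real.smoothTransition.nonneg _, Real.smoothTransition.le_one _⟩

lemma abs_cutoff9_le_one (n : ℕ) (z : E9) : |cutoff9 n z| ≤ 1 := by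
  have h0 : 0 ≤ innerCutoff n (relSq z) := Real.smoothTransition.nonneg _
  have h1 : innerCutoff n (relSq z) ≤ 1 := Real.smoothTransition.le_one _
  obtain ⟨h2, h3⟩ := outerCutoff_mem n (relSq z)
  obtain ⟨h4, h5⟩ := outerCutoff_mem n (sq3 (z.1 + z.2.1))
  obtain ⟨h6, h7⟩ := outerCutoff_mem n (sq3 z.2.2)
  rw [cutoff9, abs_of_nonneg (by positivity)]
  exact mul_le_one₀ (mul_le_one₀ h1 h2 h3) (by positivity) (mul_le_one₀ h5 h6 h7)

lemma exists_dirD_cutoff9 (n : ℕ) (z : E9) :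
    ∃ c : ℝ, ∀ α, dirD (diffDir α) (cutoff9 n) z = c * (z.1 α - z.2.1 α) := by
  set b : ℝ → ℝ := fun s => innerCutoff n s * outerCutoff n s with hb
  set q : E9 → ℝ := fun z => outerCutoff n (sq3 (z.1 + z.2.1)) * outerCutoff n (sq3 z.2.2) with hq
  have hbd : DifferentiableAt ℝ b (relSq z) :=
    ((contDiff_innerCutoff n).mul (contDiff_outerCutoff n)).contDiffAt.differentiableAt (by simp)
  have hSd : DifferentiableAt ℝ relSq z := contDiff_relSq.contDiffAt.differentiableAt (by simp)
  have hqd : DifferentiableAt ℝ q z :=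
    (contDiff_cutoff9_factor n).contDiffAt.differentiableAt (by simp)
  refine ⟨4 * deriv b (relSq z) * q z, fun α => ?_⟩
  have h1 : cutoff9 n = fun z => b (relSq z) * q z := rfl
  have h2 : dirD (diffDir α) q z = 0 := by
    refine dirD_eq_zero_of_invariant hqd fun t => ?_
    simp only [hq, diffDir, Prod.fst_add, Prod.snd_add, Prod.smul_mk, smul_zero, add_zero]
    congr 3
    simp only [smul_neg]
    abel
  rw [h1, dirD_mul (f := fun z => b (relSq z)) (hbd.comp z hSd) hqd, h2, dirD_comp hbd hSd, dirD_relSq]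
  ring

lemma cutoff9_eq_zero_of_relSq_lt {n : ℕ} {z : E9} (hz : (n + 1) * relSq z < 1) :
    cutoff9 n z = 0 := by
  have : innerCutoff n (relSq z) = 0 := Real.smoothTransition.zero_of_nonpos (by linarith)
  simp [cutoff9, this]

lemma sq_coord_le_sq3 (x : V3) (i : Fin 3) : x i ^ 2 ≤ sq3 x :=
  Finset.single_le_sum (f := fun i => x i ^ 2) (fun _ _ => sq_nonneg _) (Finset.mem_univ i)

lemma lt_of_outerCutoff_ne_zero {n : ℕ} {s : ℝ} (h : outerCutoff n s ≠ 0) : s < 2 * (n + 1) := by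
  by_contra hs
  push Not at hs
  refine h (Real.smoothTransition.zero_of_nonpos ?_)
  have hn : (0 : ℝ) < n + 1 := by positivity
  rw [sub_nonpos, le_div_iff₀ hn]
  exact hs

lemma hasCompactSupport_cutoff9 (n : ℕ) : HasCompactSupport (cutoff9 n) := by
  set r : ℝ := 2 * (n + 1) + 1 with hr
  have hr0 : 0 ≤ r := by positivity
  refine HasCompactSupport.intro (isCompact_closedBall (0 : E9) r) fun z hz => ?_
  by_contra hne
  refine hz ?_
  simp only [cutoff9, mul_ne_zero_iff] at hne
  obtain ⟨⟨-, h1⟩, h2, h3⟩ := hne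
  replace h1 := lt_of_outerCutoff_ne_zero h1
  replace h2 := lt_of_outerCutoff_ne_zero h2
  replace h3 := lt_of_outerCutoff_ne_zero h3
  have habs : ∀ t : ℝ, t ^ 2 ≤ 2 * (n + 1) → |t| ≤ r := by
    intro t ht
    refine abs_le_of_sq_le_sq ?_ hr0
    nlinarith
  have hm : ∀ i, (z.1 i - z.2.1 i) ^ 2 ≤ 2 * (n + 1) := fun i =>
    (sq_coord_le_sq3 (z.1 - z.2.1) i).trans h1.le
  have hp : ∀ i, (z.1 i + z.2.1 i) ^ 2 ≤ 2 * (n + 1) := fun i =>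
    (sq_coord_le_sq3 (z.1 + z.2.1) i).trans h2.le
  rw [mem_closedBall_zero_iff, Prod.norm_def, Prod.norm_def]
  refine max_le ?_ (max_le ?_ ?_) <;> rw [pi_norm_le_iff_of_nonneg hr0] <;> intro i <;>
    rw [Real.norm_eq_abs] <;> refine habs _ ?_
  · nlinarith [hm i, hp i, sq_nonneg (z.2.1 i)]
  · nlinarith [hm i, hp i, sq_nonneg (z.1 i)]
  · exact (sq_coord_le_sq3 z.2.2 i).trans h3.le

lemma eventually_outerCutoff_eq_one (s : ℝ) : ∀ᶠ n : ℕ in Filter.atTop, outerCutoff n s = 1 := by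
  filter_upwards [Filter.eventually_ge_atTop ⌈s⌉₊] with n hn
  refine Real.smoothTransition.one_of_one_le ?_
  have h1 : s ≤ n := Nat.ceil_le.mp hn
  have h2 : s / (n + 1) ≤ 1 := by
    rw [div_le_one (by positivity)]
    linarith
  linarith

lemma tendsto_cutoff9 {z : E9} (hz : z.1 ≠ z.2.1) :
    Filter.Tendsto (fun n => cutoff9 n z) Filter.atTop (nhds 1) := by
  have hs := relSq_pos hz
  refine tendsto_const_nhds.congr' ?_
  filter_upwards [eventually_outerCutoff_eq_one (relSq z),
    eventually_outerCutoff_eq_one (sq3 (z.1 + z.2.1)), eventually_outerCutoff_eq_one (sq3 z.2.2),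
    Filter.eventually_ge_atTop ⌈2 / relSq z⌉₊] with n h1 h2 h3 hn
  have h4 : innerCutoff n (relSq z) = 1 := by
    refine Real.smoothTransition.one_of_one_le ?_
    have : 2 / relSq z ≤ n := Nat.ceil_le.mp hn
    rw [div_le_iff₀ hs] at this
    linarith
  simp [cutoff9, h1, h2, h3, h4]

end Cutoff

lemma integral_dirD_eq_zero {f : E9 → ℝ} (hf : ContDiff ℝ 1 f) (hc : HasCompactSupport f)
    (x : E9) : Integrable (dirD x f) ∧ ∫ z, dirD x f z = 0 := by
  have hcont : Continuous (dirD x f) :=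
    (hf.continuous_fderiv one_ne_zero).clm_apply continuous_const
  have hi : Integrable (fun z => fderiv ℝ f z x) := hcont.integrable_of_hasCompactSupport (hc.fderiv_apply ℝ x)
  refine ⟨hi, ?_⟩
  have h := integral_mul_fderiv_eq_neg_fderiv_mul_of_integrable (μ := (volume : Measure E9))
    (f := fun _ => (1 : ℝ)) (g := f) (v := x) (by simp) (by simpa [dirD] using hi)
    (by simpa using hf.continuous.integrable_of_hasCompactSupport hc)
    (fun _ _ => differentiableAt_const _) (fun z _ => hf.contDiffAt.differentiableAt one_ne_zero)
  simpa [dirD] using h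

lemma ae_offDiag : ∀ᵐ z : E9, z.1 ≠ z.2.1 := by
  let s : Submodule ℝ E9 := LinearMap.ker
    (LinearMap.fst ℝ V3 (V3 × V3) - (LinearMap.fst ℝ V3 V3).comp (LinearMap.snd ℝ V3 (V3 × V3)))
  have hs : s ≠ ⊤ := by
    intro h
    have h1 : ((fun _ => 1, 0, 0) : E9) ∈ s := h ▸ Submodule.mem_top
    simp [s, funext_iff] at h1
  have h0 := Measure.addHaar_submodule (volume : Measure E9) s hs
  refine measure_mono_null (fun z hz => ?_) h0
  simp only [Set.mem_compl_iff, Set.mem_ofPred_eq, not_not] at hz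
  simp [s, hz]

lemma integral_cutoff9_mul_divergence {a : ℝ → ℝ} {g : E9 → ℝ}
    (ha : ContDiffOn ℝ (⊤ : ℕ∞) a (Set.Ioi 0)) (hg : ContDiff ℝ (⊤ : ℕ∞) g)
    (hpos : ∀ z, 0 < g z) (n : ℕ) :
    ∫ z, cutoff9 n z * ∑ α, dirD (diffDir α) (fisherField a g α) z = 0 := by
  set Y : Fin 3 → E9 → ℝ := fun α z => cutoff9 n z * fisherField a g α z with hY
  have hYd : ∀ α, ContDiff ℝ 1 (Y α) := by
    intro α
    refine contDiff_iff_contDiffAt.mpr fun z => ?_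
    by_cases hz : z.1 = z.2.1
    · have hev : Y α =ᶠ[nhds z] fun _ => 0 := by
        have hopen : IsOpen {y : E9 | (n + 1) * relSq y < 1} :=
          isOpen_lt (continuous_const.mul contDiff_relSq.continuous) continuous_const
        have hmem : z ∈ {y : E9 | (n + 1) * relSq y < 1} := by simp [relSq, hz, sq3]
        filter_upwards [hopen.mem_nhds hmem] with y hy
        simp [hY, cutoff9_eq_zero_of_relSq_lt hy]
      exact contDiffAt_const.congr_of_eventuallyEq hev
    · exact ((contDiff_cutoff9 n).contDiffAt.mul
        (contDiffAt_fisherField ha hg hpos hz α)).of_le (by exact_mod_cast le_top)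
  have hYc : ∀ α, HasCompactSupport (Y α) := fun α => (hasCompactSupport_cutoff9 n).mul_right
  have hYi := fun α => integral_dirD_eq_zero (hYd α) (hYc α) (diffDir α)
  have h1 : ∫ z, ∑ α, dirD (diffDir α) (Y α) z = 0 := by
    rw [integral_finsetSum _ fun α _ => (hYi α).1]
    exact Finset.sum_eq_zero fun α _ => (hYi α).2
  rw [← h1]
  refine integral_congr_ae ?_
  filter_upwards [ae_offDiag] with z hz
  obtain ⟨c, hc⟩ := exists_dirD_cutoff9 n z
  have h2 : ∀ α, dirD (diffDir α) (Y α) z = c * (fisherField a g α z * (z.1 α - z.2.1 α))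
      + cutoff9 n z * dirD (diffDir α) (fisherField a g α) z := by
    intro α
    rw [hY]
    simp only
    rw [dirD_mul ((contDiff_cutoff9 n).contDiffAt.differentiableAt (by simp))
      ((contDiffAt_fisherField ha hg hpos hz α).differentiableAt (by simp)), hc]
    ring
  simp only [h2, Finset.sum_add_distrib, ← Finset.mul_sum, sum_fisherField_mul_coord hz]
  simp

section Integrability

lemma finrank_V3 : Module.finrank ℝ V3 = 3 := by simp

lemma integrableOn_pow_mul_exp {b : ℝ} (hb : 0 < b) (k : ℕ) :
    IntegrableOn (fun y : ℝ => y ^ k * Real.exp (-b * y ^ 2)) (Set.Ioi 0) := by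
  have h := integrableOn_rpow_mul_exp_neg_mul_sq hb (s := k)
    (by linarith [(Nat.cast_nonneg k : (0 : ℝ) ≤ k)])
  simpa using h

lemma integrable_exp_neg_norm_sq {b : ℝ} (hb : 0 < b) :
    Integrable (fun x : V3 => Real.exp (-b * ‖x‖ ^ 2)) := by
  rw [integrable_fun_norm_addHaar (volume : Measure V3) (f := fun y => Real.exp (-b * y ^ 2)),
    finrank_V3]
  exact integrableOn_pow_mul_exp hb 2

lemma integrable_singular_exp_neg_norm_sq {b : ℝ} (hb : 0 < b) :
    Integrable (fun x : V3 => (1 + ‖x‖⁻¹) * Real.exp (-b * ‖x‖ ^ 2)) := by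
  rw [integrable_fun_norm_addHaar (volume : Measure V3)
    (f := fun y => (1 + y⁻¹) * Real.exp (-b * y ^ 2)), finrank_V3]
  refine ((integrableOn_pow_mul_exp hb 2).add (integrableOn_pow_mul_exp hb 1)).congr_fun
    (fun y hy => ?_) measurableSet_Ioi
  have : y ≠ 0 := (Set.mem_Ioi.mp hy).ne'
  simp only [Pi.add_apply, smul_eq_mul]
  field_simp
  ring

lemma integrable_singular_gaussian {b : ℝ} (hb : 0 < b) :
    Integrable (fun z : E9 => (1 + ‖z.1 - z.2.1‖⁻¹) * Real.exp (-b * ‖z.1 - z.2.1‖ ^ 2)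
      * Real.exp (-b * ‖z.2.1‖ ^ 2) * Real.exp (-b * ‖z.2.2‖ ^ 2)) := by
  have h1 := ((integrable_singular_exp_neg_norm_sq hb).mul_prod
    (integrable_exp_neg_norm_sq hb)).mul_prod (integrable_exp_neg_norm_sq hb)
  have h2 : MeasurePreserving (fun p : (V3 × V3) × V3 => ((p.1.1 - p.1.2, p.1.2), p.2))
      ((volume.prod volume).prod volume) ((volume.prod volume).prod volume) :=
    (measurePreserving_sub_prod (volume : Measure V3) (volume : Measure V3)).prod
      (MeasurePreserving.id (volume : Measure V3))
  have h3 := (volume_preserving_prodAssoc (α₁ := V3) (β₁ := V3) (γ₁ := V3)).symm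
  exact h3.integrable_comp_of_integrable (h2.integrable_comp_of_integrable h1)

lemma exists_pow_mul_exp_le {b : ℝ} (hb : 0 < b) (m : ℕ) :
    ∃ C : ℝ, 0 ≤ C ∧ ∀ t : ℝ, 0 ≤ t → (1 + t) ^ m * Real.exp (-b * t ^ 2) ≤ C := by
  refine ⟨m.factorial * Real.exp (1 + 1 / (4 * b)), by positivity, fun t ht => ?_⟩
  have h1 := Real.pow_div_factorial_le_exp (1 + t) (by linarith) m
  rw [div_le_iff₀ (by positivity)] at h1
  calc (1 + t) ^ m * Real.exp (-b * t ^ 2)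
      ≤ Real.exp (1 + t) * m.factorial * Real.exp (-b * t ^ 2) := by gcongr
    _ = m.factorial * Real.exp (1 + t + -b * t ^ 2) := by rw [Real.exp_add (1 + t)]; ring
    _ ≤ m.factorial * Real.exp (1 + 1 / (4 * b)) := by
      refine mul_le_mul_of_nonneg_left (Real.exp_le_exp.mpr ?_) (by positivity)
      have : 1 / (4 * b) - (t + -b * t ^ 2) = b * (t - 1 / (2 * b)) ^ 2 := by field_simp; ring
      nlinarith [mul_nonneg hb.le (sq_nonneg (t - 1 / (2 * b)))]

lemma norm_sq_le_sq3 (x : V3) : ‖x‖ ^ 2 ≤ sq3 x := by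
  have h0 : 0 ≤ sq3 x := Finset.sum_nonneg fun i _ => sq_nonneg _
  have : ‖x‖ ≤ Real.sqrt (sq3 x) := by
    rw [pi_norm_le_iff_of_nonneg (Real.sqrt_nonneg _)]
    intro i
    rw [Real.norm_eq_abs]
    exact Real.abs_le_sqrt (sq_coord_le_sq3 x i)
  calc ‖x‖ ^ 2 ≤ Real.sqrt (sq3 x) ^ 2 := by gcongr
    _ = sq3 x := Real.sq_sqrt h0

/-- The dominating function: the density times a polynomial and the integrable singularity. -/
def singularWeight (g : E9 → ℝ) (m : ℕ) (z : E9) : ℝ :=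
  (1 + ‖z.1 - z.2.1‖⁻¹) * (g z * (1 + ‖z‖) ^ m)

lemma continuousOn_singularWeight {g : E9 → ℝ} (hg : Continuous g) (m : ℕ) :
    ContinuousOn (singularWeight g m) {z : E9 | z.1 ≠ z.2.1} := by
  intro z hz
  have hz' : ‖z.1 - z.2.1‖ ≠ 0 := norm_ne_zero_iff.mpr (sub_ne_zero.mpr hz)
  have h1 : ContinuousAt (fun z : E9 => ‖z.1 - z.2.1‖) z := by fun_prop
  exact ((continuousAt_const.add (h1.inv₀ hz')).mul
    (hg.continuousAt.mul (by fun_prop))).continuousWithinAt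

lemma aestronglyMeasurable_of_continuousOn_offDiag {f : E9 → ℝ}
    (hf : ContinuousOn f {z : E9 | z.1 ≠ z.2.1}) : AEStronglyMeasurable f volume := by
  rw [← Measure.restrict_eq_self_of_ae_mem (s := {z : E9 | z.1 ≠ z.2.1}) ae_offDiag]
  exact hf.aestronglyMeasurable isOpen_offDiag.measurableSet

lemma integrable_singularWeight {g : E9 → ℝ} (hg : Continuous g) (hpos : ∀ z, 0 < g z)
    {C b : ℝ} (hb : 0 < b)
    (hle : ∀ z : E9, g z ≤ C * Real.exp (-b * (sq3 z.1 + sq3 z.2.1 + sq3 z.2.2))) (m : ℕ) :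
    Integrable (singularWeight g m) := by
  obtain ⟨K, hK0, hK⟩ := exists_pow_mul_exp_le (half_pos hb) m
  have hC : 0 ≤ C := by
    by_contra h
    push Not at h
    have := (hpos 0).trans_le (hle 0)
    exact absurd this (not_lt.mpr (mul_nonpos_of_nonpos_of_nonneg h.le (Real.exp_pos _).le))
  refine ((integrable_singular_gaussian (b := b / 8) (by positivity)).const_mul (C * K)).mono'
    (aestronglyMeasurable_of_continuousOn_offDiag (continuousOn_singularWeight hg m))
    (Filter.Eventually.of_forall fun z => ?_)
  have hg0 := (hpos z).le
  rw [Real.norm_eq_abs, abs_of_nonneg (by unfold singularWeight; positivity), singularWeight]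
  have hu := norm_sq_le_sq3 z.1
  have hv := norm_sq_le_sq3 z.2.1
  have hw := norm_sq_le_sq3 z.2.2
  have hz : ‖z‖ ^ 2 ≤ sq3 z.1 + sq3 z.2.1 + sq3 z.2.2 := by
    have h0 := sq_nonneg ‖z.1‖
    have h1 := sq_nonneg ‖z.2.1‖
    have h2 := sq_nonneg ‖z.2.2‖
    rw [Prod.norm_def, Prod.norm_def]
    rcases max_choice ‖z.1‖ (max ‖z.2.1‖ ‖z.2.2‖) with h | h <;> rw [h]
    · linarith
    · rcases max_choice ‖z.2.1‖ ‖z.2.2‖ with h | h <;> rw [h] <;> linarith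
  have hd : ‖z.1 - z.2.1‖ ^ 2 ≤ 2 * (‖z.1‖ ^ 2 + ‖z.2.1‖ ^ 2) := by
    have h1 := norm_sub_le z.1 z.2.1
    have h2 := norm_nonneg (z.1 - z.2.1)
    nlinarith [sq_nonneg (‖z.1‖ - ‖z.2.1‖)]
  have key : g z * (1 + ‖z‖) ^ m ≤ C * K * (Real.exp (-(b / 8) * ‖z.1 - z.2.1‖ ^ 2) *
      Real.exp (-(b / 8) * ‖z.2.1‖ ^ 2) * Real.exp (-(b / 8) * ‖z.2.2‖ ^ 2)) := by
    set s := sq3 z.1 + sq3 z.2.1 + sq3 z.2.2 with hs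
    calc g z * (1 + ‖z‖) ^ m ≤ C * Real.exp (-b * s) * (1 + ‖z‖) ^ m := by
          gcongr; exact hle z
      _ = C * (Real.exp (-(b / 2) * s) * ((1 + ‖z‖) ^ m * Real.exp (-(b / 2) * s))) := by
          rw [show -b * s = -(b / 2) * s + -(b / 2) * s by ring, Real.exp_add]; ring
      _ ≤ C * (Real.exp (-(b / 2) * s) * ((1 + ‖z‖) ^ m * Real.exp (-(b / 2) * ‖z‖ ^ 2))) := by
          gcongr C * (_ * (_ * Real.exp ?_))
          nlinarith
      _ ≤ C * (Real.exp (-(b / 2) * s) * K) := by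
          gcongr; exact hK _ (norm_nonneg _)
      _ ≤ C * (Real.exp (-(b / 8) * ‖z.1 - z.2.1‖ ^ 2 + -(b / 8) * ‖z.2.1‖ ^ 2
            + -(b / 8) * ‖z.2.2‖ ^ 2) * K) := by
          gcongr C * (Real.exp ?_ * K)
          nlinarith [sq_nonneg ‖z.1‖, sq_nonneg ‖z.2.1‖, sq_nonneg ‖z.2.2‖]
      _ = _ := by rw [Real.exp_add, Real.exp_add]; ring
  calc (1 + ‖z.1 - z.2.1‖⁻¹) * (g z * (1 + ‖z‖) ^ m)
      ≤ (1 + ‖z.1 - z.2.1‖⁻¹) * _ := mul_le_mul_of_nonneg_left key (by positivity)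
    _ = _ := by ring

/-- Polynomial growth of the derivatives of `log g` bounds the derivatives of `g` by
`g` times a polynomial. -/
lemma exists_norm_iteratedFDeriv_le {g : E9 → ℝ} (hg : ContDiff ℝ (⊤ : ℕ∞) g)
    (hpos : ∀ z, 0 < g z)
    (hPoly : ∀ k : ℕ, k ≤ 4 → ∃ C : ℝ, ∃ n : ℕ, ∀ z : E9,
        ‖iteratedFDeriv ℝ k (fun w => Real.log (g w)) z‖ ≤ C * (1 + ‖z‖) ^ n) :
    ∃ K : ℝ, ∃ m : ℕ, 1 ≤ K ∧ ∀ k ≤ 3, ∀ z : E9,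
      ‖iteratedFDeriv ℝ k g z‖ ≤ g z * (K * (1 + ‖z‖) ^ m) := by
  choose! C n hCn using hPoly
  set c : ℝ := 1 + ∑ k ∈ Finset.range 4, |C k| with hc
  set N : ℕ := ∑ k ∈ Finset.range 4, n k
  have hc1 : 1 ≤ c := le_add_of_nonneg_right (Finset.sum_nonneg fun _ _ => abs_nonneg _)
  have hD1 : ∀ z : E9, 1 ≤ c * (1 + ‖z‖) ^ N := fun z =>
    one_le_mul_of_one_le_of_one_le hc1 (one_le_pow₀ (by linarith [norm_nonneg z]))
  have hlog : ContDiff ℝ (⊤ : ℕ∞) (fun w => Real.log (g w)) := hg.log fun z => (hpos z).ne'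
  have hcomp : g = Real.exp ∘ fun w => Real.log (g w) := by
    ext z; simp [Real.exp_log (hpos z)]
  refine ⟨6 * c ^ 3, N * 3, ?_, fun k hk z => ?_⟩
  · nlinarith [one_le_pow₀ hc1 (n := 3)]
  have hexp : ∀ i ≤ k, ‖iteratedFDeriv ℝ i Real.exp (Real.log (g z))‖ ≤ g z := by
    intro i _
    rw [norm_iteratedFDeriv_eq_norm_iteratedDeriv, iteratedDeriv_eq_iterate, Real.iter_deriv_exp,
      Real.exp_log (hpos z), Real.norm_eq_abs, abs_of_pos (hpos z)]
  have hder : ∀ i, 1 ≤ i → i ≤ k →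
      ‖iteratedFDeriv ℝ i (fun w => Real.log (g w)) z‖ ≤ (c * (1 + ‖z‖) ^ N) ^ i := by
    intro i hi hik
    have hmem : i ∈ Finset.range 4 := Finset.mem_range.mpr (by omega)
    calc _ ≤ C i * (1 + ‖z‖) ^ n i := hCn i (by omega) z
      _ ≤ c * (1 + ‖z‖) ^ N := by
        gcongr
        · have := Finset.single_le_sum (f := fun k => |C k|) (fun _ _ => abs_nonneg _) hmem
          linarith [le_abs_self (C i)]
        · linarith [norm_nonneg z]
        · exact Finset.single_le_sum (f := n) (fun _ _ => Nat.zero_le _) hmem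
      _ ≤ _ := le_self_pow₀ (hD1 z) (by omega)
  have h := norm_iteratedFDeriv_comp_le (n := k) Real.contDiff_exp hlog
    (by exact_mod_cast le_top) z hexp hder
  rw [← hcomp] at h
  have hfac : (k.factorial : ℝ) ≤ 6 := by
    exact_mod_cast (Nat.factorial_le hk).trans (by decide)
  have hg0 := (hpos z).le
  calc _ ≤ k.factorial * g z * (c * (1 + ‖z‖) ^ N) ^ k := h
    _ ≤ 6 * g z * (c * (1 + ‖z‖) ^ N) ^ 3 := by
      gcongr
      exact hD1 z
    _ = _ := by rw [mul_pow, ← pow_mul]; ring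

lemma abs_dirD_le {f : E9 → ℝ} (hf : ContDiff ℝ (⊤ : ℕ∞) f) {x : E9} (hx : ‖x‖ ≤ 1) (z : E9) :
    |dirD x f z| ≤ ‖iteratedFDeriv ℝ 1 f z‖ := by
  have := norm_iteratedFDeriv_dirD_le hf hx 0 z
  rwa [norm_iteratedFDeriv_zero] at this

variable {a : ℝ → ℝ} {A : ℝ}

lemma abs_proj_le (x : V3) (α β : Fin 3) : |proj x α β| ≤ 2 := by
  have h0 : 0 ≤ sq3 x := Finset.sum_nonneg fun i _ => sq_nonneg _
  have h1 : |x α * x β / sq3 x| ≤ 1 := by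
    rw [abs_div, abs_of_nonneg h0]
    refine div_le_one_of_le₀ ?_ h0
    have h2 := sq_coord_le_sq3 x α
    have h3 := sq_coord_le_sq3 x β
    rw [abs_le]
    constructor <;> nlinarith [sq_nonneg (x α + x β), sq_nonneg (x α - x β)]
  have h4 : |(if α = β then (1 : ℝ) else 0)| ≤ 1 := by split_ifs <;> simp
  exact (abs_sub _ _).trans (by linarith)

lemma nrm3_pos {z : E9} (hz : z.1 ≠ z.2.1) : 0 < nrm3 (z.1 - z.2.1) :=
  Real.sqrt_pos.mpr (relSq_pos hz)

lemma abs_landauKernel_le (hA : ∀ r : ℝ, 0 < r → |a r| ≤ A) {z : E9} (hz : z.1 ≠ z.2.1)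
    (α β : Fin 3) : |landauKernel a α β z| ≤ A * 2 := by
  have h := hA _ (nrm3_pos hz)
  rw [landauKernel, abs_mul]
  exact mul_le_mul h (abs_proj_le _ _ _) (abs_nonneg _) ((abs_nonneg _).trans h)

lemma abs_landauDrift_le (hA : ∀ r : ℝ, 0 < r → |a r| ≤ A) {z : E9} (hz : z.1 ≠ z.2.1)
    (β : Fin 3) : |landauDrift a β z| ≤ 4 * A * ‖z.1 - z.2.1‖⁻¹ := by
  have h := hA _ (nrm3_pos hz)
  have hA0 : 0 ≤ A := (abs_nonneg _).trans h
  have hn : 0 < ‖z.1 - z.2.1‖ := norm_pos_iff.mpr (sub_ne_zero.mpr hz)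
  have hs := relSq_pos hz
  have h1 : |z.1 β - z.2.1 β| ≤ ‖z.1 - z.2.1‖ := norm_le_pi_norm (z.1 - z.2.1) β
  have h2 : ‖z.1 - z.2.1‖ ^ 2 ≤ relSq z := norm_sq_le_sq3 _
  have h3 : |z.1 β - z.2.1 β| / relSq z ≤ ‖z.1 - z.2.1‖⁻¹ := by
    rw [div_le_iff₀ hs]
    calc _ ≤ ‖z.1 - z.2.1‖ := h1
      _ = ‖z.1 - z.2.1‖⁻¹ * ‖z.1 - z.2.1‖ ^ 2 := by field_simp
      _ ≤ _ := by gcongr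
  rw [landauDrift, abs_mul, mul_div_assoc, abs_mul, abs_div, abs_of_pos hs]
  calc _ ≤ |(-4 : ℝ)| * (A * ‖z.1 - z.2.1‖⁻¹) := by gcongr
    _ = _ := by norm_num; ring

lemma abs_sum_fin_three_le {f : Fin 3 → ℝ} {C : ℝ} (h : ∀ i, |f i| ≤ C) : |∑ i, f i| ≤ 3 * C := by
  calc |∑ i, f i| ≤ ∑ i, |f i| := Finset.abs_sum_le_sum_abs _ _
    _ ≤ ∑ _i : Fin 3, C := Finset.sum_le_sum fun i _ => h i
    _ = 3 * C := by simp

lemma abs_Dop9_le (ha : ContDiffOn ℝ (⊤ : ℕ∞) a (Set.Ioi 0)) (hA : ∀ r : ℝ, 0 < r → |a r| ≤ A)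
    {h : E9 → ℝ} (hh : ContDiff ℝ (⊤ : ℕ∞) h) {z : E9} (hz : z.1 ≠ z.2.1) {Q : ℝ}
    (h1 : ‖iteratedFDeriv ℝ 1 h z‖ ≤ Q) (h2 : ‖iteratedFDeriv ℝ 2 h z‖ ≤ Q) :
    |Dop9 a h z| ≤ 18 * A * ((1 + ‖z.1 - z.2.1‖⁻¹) * Q) := by
  have hA0 : 0 ≤ A := (abs_nonneg _).trans (hA 1 one_pos)
  have hQ : 0 ≤ Q := (norm_nonneg _).trans h1
  have hi : 0 ≤ ‖z.1 - z.2.1‖⁻¹ := by positivity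
  have e1 : ∀ β, |landauDrift a β z * dirD (diffDir β) h z| ≤ 4 * A * ‖z.1 - z.2.1‖⁻¹ * Q := by
    intro β
    rw [abs_mul]
    exact mul_le_mul (abs_landauDrift_le hA hz β)
      ((abs_dirD_le hh (norm_diffDir_le β) z).trans h1) (abs_nonneg _) (by positivity)
  have e2 : ∀ β α, |landauKernel a α β z * dirD (diffDir α) (dirD (diffDir β) h) z|
      ≤ A * 2 * Q := by
    intro β α
    rw [abs_mul]
    refine mul_le_mul (abs_landauKernel_le hA hz α β) ?_ (abs_nonneg _) (by positivity)
    exact ((abs_dirD_le (contDiff_dirD hh _) (norm_diffDir_le α) z).trans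
      (norm_iteratedFDeriv_dirD_le hh (norm_diffDir_le β) 1 z)).trans h2
  rw [Dop9_eq_of_ne ha hh hz]
  refine (abs_add_le _ _).trans ((add_le_add (abs_sum_fin_three_le e1)
    (abs_sum_fin_three_le fun β => abs_sum_fin_three_le (e2 β))).trans ?_)
  have : 0 ≤ A * ‖z.1 - z.2.1‖⁻¹ * Q := by positivity
  nlinarith

end Integrability

section Main

variable {a : ℝ → ℝ} {g : E9 → ℝ} {A K : ℝ} {m : ℕ}

lemma continuousAt_Dop9 (ha : ContDiffOn ℝ (⊤ : ℕ∞) a (Set.Ioi 0)) {h : E9 → ℝ}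
    (hh : ContDiff ℝ (⊤ : ℕ∞) h) {z : E9} (hz : z.1 ≠ z.2.1) : ContinuousAt (Dop9 a h) z := by
  have h1 : Dop9 a h = fun z => ∑ α, dirD (diffDir α) (flux9 a h α) z := funext (Dop9_eq a h)
  rw [h1]
  refine tendsto_finsetSum _ fun α _ => ?_
  exact ((contDiffAt_flux9 ha hh hz α).fderiv_right (m := 0)
    (by exact_mod_cast le_top)).continuousAt.clm_apply continuousAt_const

lemma integrable_of_abs_le_singularWeight {f : E9 → ℝ}
    (hW : ∀ m, Integrable (singularWeight g m))
    (hf : ContinuousOn f {z : E9 | z.1 ≠ z.2.1}) (C : ℝ) (k : ℕ)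
    (hle : ∀ z : E9, z.1 ≠ z.2.1 → |f z| ≤ C * singularWeight g k z) : Integrable f :=
  ((hW k).const_mul C).mono' (aestronglyMeasurable_of_continuousOn_offDiag hf)
    (ae_offDiag.mono hle)

lemma abs_logGradW_le (hg : ContDiff ℝ (⊤ : ℕ∞) g) (hpos : ∀ z, 0 < g z)
    (hK : ∀ k ≤ 3, ∀ z : E9, ‖iteratedFDeriv ℝ k g z‖ ≤ g z * (K * (1 + ‖z‖) ^ m))
    (γ : Fin 3) (z : E9) : |logGradW g γ z| ≤ K * (1 + ‖z‖) ^ m := by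
  rw [logGradW, abs_div, abs_of_pos (hpos z), div_le_iff₀ (hpos z), mul_comm]
  exact (abs_dirD_le hg (norm_wDir_le γ) z).trans (hK 1 (by norm_num) z)

lemma integrable_logGradW_mul_Dop9 (ha : ContDiffOn ℝ (⊤ : ℕ∞) a (Set.Ioi 0))
    (hA : ∀ r : ℝ, 0 < r → |a r| ≤ A) (hg : ContDiff ℝ (⊤ : ℕ∞) g) (hpos : ∀ z, 0 < g z)
    (hK1 : 1 ≤ K)
    (hK : ∀ k ≤ 3, ∀ z : E9, ‖iteratedFDeriv ℝ k g z‖ ≤ g z * (K * (1 + ‖z‖) ^ m))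
    (hW : ∀ m, Integrable (singularWeight g m)) :
    Integrable (fun z => ∑ γ, logGradW g γ z * Dop9 a (dirD (wDir γ) g) z) := by
  refine integrable_of_abs_le_singularWeight hW (fun z hz => ContinuousAt.continuousWithinAt ?_)
    (3 * (K * (18 * A * K))) (m + m) fun z hz => ?_
  · exact tendsto_finsetSum _ fun γ _ => (contDiff_logGradW hg hpos γ).continuous.continuousAt.mul
      (continuousAt_Dop9 ha (contDiff_dirD hg _) hz)
  · have hb : ∀ γ, |logGradW g γ z * Dop9 a (dirD (wDir γ) g) z| ≤ K * (1 + ‖z‖) ^ m *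
        (18 * A * ((1 + ‖z.1 - z.2.1‖⁻¹) * (g z * (K * (1 + ‖z‖) ^ m)))) := by
      intro γ
      rw [abs_mul]
      refine mul_le_mul (abs_logGradW_le hg hpos hK γ z) ?_ (abs_nonneg _) (by positivity)
      exact abs_Dop9_le ha hA (contDiff_dirD hg _) hz
        ((norm_iteratedFDeriv_dirD_le hg (norm_wDir_le γ) 1 z).trans (hK 2 (by norm_num) z))
        ((norm_iteratedFDeriv_dirD_le hg (norm_wDir_le γ) 2 z).trans (hK 3 le_rfl z))
    refine (abs_sum_fin_three_le hb).trans (le_of_eq ?_)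
    rw [singularWeight, pow_add]
    ring

lemma integrable_logGradW_sq_mul_Dop9 (ha : ContDiffOn ℝ (⊤ : ℕ∞) a (Set.Ioi 0))
    (hA : ∀ r : ℝ, 0 < r → |a r| ≤ A) (hg : ContDiff ℝ (⊤ : ℕ∞) g) (hpos : ∀ z, 0 < g z)
    (hK1 : 1 ≤ K)
    (hK : ∀ k ≤ 3, ∀ z : E9, ‖iteratedFDeriv ℝ k g z‖ ≤ g z * (K * (1 + ‖z‖) ^ m))
    (hW : ∀ m, Integrable (singularWeight g m)) :
    Integrable (fun z => (∑ γ, logGradW g γ z ^ 2) * Dop9 a g z) := by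
  refine integrable_of_abs_le_singularWeight hW (fun z hz => ContinuousAt.continuousWithinAt ?_)
    (3 * K ^ 2 * (18 * A * K)) (m * 2 + m) fun z hz => ?_
  · exact ContinuousAt.mul (tendsto_finsetSum _ fun γ _ =>
      ((contDiff_logGradW hg hpos γ).continuous.continuousAt.pow 2)) (continuousAt_Dop9 ha hg hz)
  · have hb : ∀ γ, |logGradW g γ z ^ 2| ≤ (K * (1 + ‖z‖) ^ m) ^ 2 := by
      intro γ
      rw [abs_pow]
      exact pow_le_pow_left₀ (abs_nonneg _) (abs_logGradW_le hg hpos hK γ z) 2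
    rw [abs_mul]
    refine (mul_le_mul (abs_sum_fin_three_le hb) (abs_Dop9_le ha hA hg hz (hK 1 (by norm_num) z)
      (hK 2 (by norm_num) z)) (abs_nonneg _) (by positivity)).trans (le_of_eq ?_)
    rw [singularWeight, pow_add, pow_mul]
    ring

lemma dissipation_nonneg (ha_nonneg : ∀ r : ℝ, 0 < r → 0 ≤ a r) (hpos : ∀ z, 0 < g z) {z : E9}
    (hz : z.1 ≠ z.2.1) : 0 ≤ dissipation a g z :=
  mul_nonneg (div_nonneg (ha_nonneg _ (nrm3_pos hz)) (hpos z).le)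
    (Finset.sum_nonneg fun _ _ => Finset.sum_nonneg fun _ _ => sq_nonneg _)

lemma integrable_dissipation (ha : ContDiffOn ℝ (⊤ : ℕ∞) a (Set.Ioi 0))
    (hA : ∀ r : ℝ, 0 < r → |a r| ≤ A) (hg : ContDiff ℝ (⊤ : ℕ∞) g) (hpos : ∀ z, 0 < g z)
    (hK1 : 1 ≤ K)
    (hK : ∀ k ≤ 3, ∀ z : E9, ‖iteratedFDeriv ℝ k g z‖ ≤ g z * (K * (1 + ‖z‖) ^ m))
    (hW : ∀ m, Integrable (singularWeight g m)) : Integrable (dissipation a g) := by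
  have hA0 : 0 ≤ A := (abs_nonneg _).trans (hA 1 one_pos)
  refine integrable_of_abs_le_singularWeight hW ?_ (A * (3 * (3 * (12 * K ^ 2) ^ 2))) (m * 4)
    fun z hz => ?_
  · refine ContinuousOn.congr (fun z hz => ContinuousAt.continuousWithinAt ?_)
      (fun z hz => dissipation_eq hz hg hpos)
    refine tendsto_finsetSum _ fun γ _ => tendsto_finsetSum _ fun α _ => ?_
    exact (contDiff_dirD (contDiff_logGradW hg hpos γ) _).continuous.continuousAt.mul
      ((contDiffAt_flux9 ha (contDiff_dirD hg _) hz α).continuousAt.sub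
        ((contDiff_logGradW hg hpos γ).continuous.continuousAt.mul
          (contDiffAt_flux9 ha hg hz α).continuousAt))
  · have hg0 := hpos z
    set P := K * (1 + ‖z‖) ^ m with hP
    have hP1 : 1 ≤ P :=
      one_le_mul_of_one_le_of_one_le hK1 (one_le_pow₀ (by linarith [norm_nonneg z]))
    have e1 : ∀ α γ, |∑ β, proj (z.1 - z.2.1) α β * dirD (diffDir β) (dirD (wDir γ) g) z|
        ≤ 3 * (2 * (g z * P)) := fun α γ => abs_sum_fin_three_le fun β => by
      rw [abs_mul]
      exact mul_le_mul (abs_proj_le _ _ _)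
        (((abs_dirD_le (contDiff_dirD hg _) (norm_diffDir_le β) z).trans
          (norm_iteratedFDeriv_dirD_le hg (norm_wDir_le γ) 1 z)).trans (hK 2 (by norm_num) z))
        (abs_nonneg _) (by norm_num)
    have e2 : ∀ α, |∑ β, proj (z.1 - z.2.1) α β * dirD (diffDir β) g z|
        ≤ 3 * (2 * (g z * P)) := fun α => abs_sum_fin_three_le fun β => by
      rw [abs_mul]
      exact mul_le_mul (abs_proj_le _ _ _)
        ((abs_dirD_le hg (norm_diffDir_le β) z).trans (hK 1 (by norm_num) z))
        (abs_nonneg _) (by norm_num)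
    have e3 : ∀ α γ,
        |((∑ β, proj (z.1 - z.2.1) α β * dirD (diffDir β) (dirD (wDir γ) g) z)
          - (∑ β, proj (z.1 - z.2.1) α β * dirD (diffDir β) g z) * logGradW g γ z) ^ 2|
        ≤ (12 * (g z * P ^ 2)) ^ 2 := by
      intro α γ
      rw [abs_pow]
      refine pow_le_pow_left₀ (abs_nonneg _) ((abs_sub _ _).trans ?_) 2
      rw [abs_mul]
      have h4 := mul_le_mul (e2 α) (abs_logGradW_le hg hpos hK γ z) (abs_nonneg _) (by positivity)
      have h5 : g z * P ≤ g z * P ^ 2 := by gcongr; exact le_self_pow₀ hP1 (by norm_num)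
      rw [← hP] at h4
      nlinarith [e1 α γ]
    have e4 := abs_sum_fin_three_le fun α => abs_sum_fin_three_le (e3 α)
    have e5 : |a (nrm3 (z.1 - z.2.1)) / g z| ≤ A / g z := by
      rw [abs_div, abs_of_pos hg0]
      exact div_le_div_of_nonneg_right (hA _ (nrm3_pos hz)) hg0.le
    rw [dissipation, abs_mul]
    have e6 : (1 : ℝ) ≤ 1 + ‖z.1 - z.2.1‖⁻¹ := le_add_of_nonneg_right (by positivity)
    calc _ ≤ A / g z * (3 * (3 * (12 * (g z * P ^ 2)) ^ 2)) :=
          mul_le_mul e5 e4 (abs_nonneg _) (by positivity)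
      _ = A * (3 * (3 * (12 * K ^ 2) ^ 2)) * (1 * (g z * (1 + ‖z‖) ^ (m * 4))) := by
          rw [hP, pow_mul]
          field_simp
      _ ≤ _ := by
          rw [singularWeight]
          gcongr

end Main

/-- The third-variable term `Term_{k≠i≠j}` in the proof of Fisher decay along the
Landau–Kac flow: with `M_{αγ} = (∂_{u_α}−∂_{v_α})∂_{w_γ} g`, `η = ∇_u g − ∇_v g`,
`ξ = ∇_w g / g`, one has
`∫ (∇_w g/g)·∇_w D − (1/2)∫ (|∇_w g|²/g²) D = −∫ (a/g)‖ΠM − (Πη)⊗ξ‖_F² ≤ 0`. -/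
theorem third_variable_term_fisher_decay
    (a : ℝ → ℝ)
    (ha_smooth : ContDiffOn ℝ (⊤ : ℕ∞) a (Set.Ioi 0))
    (ha_nonneg : ∀ r : ℝ, 0 < r → 0 ≤ a r)
    (ha_bdd : ∃ C : ℝ, ∀ r : ℝ, 0 < r → |a r| ≤ C ∧ |deriv a r| ≤ C)
    (g : E9 → ℝ)
    (hsmooth : ContDiff ℝ (⊤ : ℕ∞) g) (hpos : ∀ z, 0 < g z)
    (hGauss : ∃ c C β β' : ℝ, 0 < c ∧ c ≤ C ∧ 0 < β ∧ 0 < β' ∧ ∀ z : E9,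
        c * Real.exp (-β * (sq3 z.1 + sq3 z.2.1 + sq3 z.2.2)) ≤ g z ∧
        g z ≤ C * Real.exp (-β' * (sq3 z.1 + sq3 z.2.1 + sq3 z.2.2)))
    (hPoly : ∀ k : ℕ, k ≤ 4 → ∃ C : ℝ, ∃ n : ℕ, ∀ z : E9,
        ‖iteratedFDeriv ℝ k (fun w => Real.log (g w)) z‖ ≤ C * (1 + ‖z‖) ^ n) :
    (∫ z : E9, ∑ γ, (pdw g z γ / g z) * pdw (Dop9 a g) z γ)
      - (1 / 2) * (∫ z : E9, ((∑ γ, (pdw g z γ) ^ 2) / (g z) ^ 2) * Dop9 a g z)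
      = -(∫ z : E9, (a (nrm3 (z.1 - z.2.1)) / g z) *
          ∑ α, ∑ γ,
            ((∑ β, proj (z.1 - z.2.1) α β *
                (pdu (fun y => pdw g y γ) z β - pdvv (fun y => pdw g y γ) z β))
              - (∑ β, proj (z.1 - z.2.1) α β * (pdu g z β - pdvv g z β))
                  * (pdw g z γ / g z)) ^ 2) ∧
    (∫ z : E9, ∑ γ, (pdw g z γ / g z) * pdw (Dop9 a g) z γ)
      - (1 / 2) * (∫ z : E9, ((∑ γ, (pdw g z γ) ^ 2) / (g z) ^ 2) * Dop9 a g z) ≤ 0 := by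
  obtain ⟨A, hA'⟩ := ha_bdd
  have hA : ∀ r : ℝ, 0 < r → |a r| ≤ A := fun r hr => (hA' r hr).1
  obtain ⟨c, C, β, b, -, -, -, hb, hG⟩ := hGauss
  obtain ⟨K, m, hK1, hK⟩ := exists_norm_iteratedFDeriv_le hsmooth hpos hPoly
  have hW := integrable_singularWeight hsmooth.continuous hpos hb fun z => (hG z).2
  have hi1 := integrable_logGradW_mul_Dop9 ha_smooth hA hsmooth hpos hK1 hK hW
  have hi2 := integrable_logGradW_sq_mul_Dop9 ha_smooth hA hsmooth hpos hK1 hK hW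
  have hi3 := integrable_dissipation ha_smooth hA hsmooth hpos hK1 hK hW
  have e1 : (∫ z : E9, ∑ γ, (pdw g z γ / g z) * pdw (Dop9 a g) z γ)
      = ∫ z, ∑ γ, logGradW g γ z * Dop9 a (dirD (wDir γ) g) z := by
    refine integral_congr_ae ?_
    filter_upwards [ae_offDiag] with z hz
    simp only [pdw_Dop9 ha_smooth hsmooth hz, pdw_eq_dirD, logGradW]
  have e2 : (∫ z : E9, ((∑ γ, (pdw g z γ) ^ 2) / (g z) ^ 2) * Dop9 a g z)
      = ∫ z, (∑ γ, logGradW g γ z ^ 2) * Dop9 a g z := by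
    simp only [pdw_eq_dirD, logGradW, div_pow, Finset.sum_div]
  have e3 : (∫ z : E9, (a (nrm3 (z.1 - z.2.1)) / g z) *
          ∑ α, ∑ γ,
            ((∑ β, proj (z.1 - z.2.1) α β *
                (pdu (fun y => pdw g y γ) z β - pdvv (fun y => pdw g y γ) z β))
              - (∑ β, proj (z.1 - z.2.1) α β * (pdu g z β - pdvv g z β))
                  * (pdw g z γ / g z)) ^ 2) = ∫ z, dissipation a g z := by
    simp only [pdu_sub_pdvv]
    rfl
  have hi12 := hi1.sub (hi2.const_mul (1 / 2))
  have hlim : Filter.Tendsto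
      (fun n => ∫ z, cutoff9 n z * ∑ α, dirD (diffDir α) (fisherField a g α) z) Filter.atTop
      (nhds (∫ z, ((∑ γ, logGradW g γ z * Dop9 a (dirD (wDir γ) g) z)
        - 1 / 2 * ((∑ γ, logGradW g γ z ^ 2) * Dop9 a g z) + dissipation a g z))) := by
    have hi : Integrable (fun z => (∑ γ, logGradW g γ z * Dop9 a (dirD (wDir γ) g) z)
        - 1 / 2 * ((∑ γ, logGradW g γ z ^ 2) * Dop9 a g z) + dissipation a g z) := hi12.add hi3
    have hae : (fun z => ∑ α, dirD (diffDir α) (fisherField a g α) z) =ᵐ[volume] fun z =>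
        (∑ γ, logGradW g γ z * Dop9 a (dirD (wDir γ) g) z)
        - 1 / 2 * ((∑ γ, logGradW g γ z ^ 2) * Dop9 a g z) + dissipation a g z := by
      filter_upwards [ae_offDiag] with z hz
      exact sum_dirD_fisherField ha_smooth hsmooth hpos hz
    have hi' := hi.congr hae.symm
    refine tendsto_integral_of_dominated_convergence _ (fun n =>
      (contDiff_cutoff9 n).continuous.aestronglyMeasurable.mul hi'.aestronglyMeasurable) hi'.norm
      (fun n => Filter.Eventually.of_forall fun z => ?_) ?_
    · rw [norm_mul]
      exact mul_le_of_le_one_left (norm_nonneg _) (abs_cutoff9_le_one n z)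
    · filter_upwards [ae_offDiag, hae] with z hz hzz
      rw [← hzz]
      simpa using (tendsto_cutoff9 hz).mul_const (∑ α, dirD (diffDir α) (fisherField a g α) z)
  simp only [integral_cutoff9_mul_divergence ha_smooth hsmooth hpos] at hlim
  have hzero := tendsto_nhds_unique hlim tendsto_const_nhds
  have hsplit : (∫ z, ∑ γ, logGradW g γ z * Dop9 a (dirD (wDir γ) g) z)
      - 1 / 2 * (∫ z, (∑ γ, logGradW g γ z ^ 2) * Dop9 a g z) = -∫ z, dissipation a g z := by
    have h1 := integral_add hi12 hi3
    have h2 := integral_sub hi1 (hi2.const_mul (1 / 2))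
    rw [integral_const_mul] at h2
    simp only [Pi.sub_apply] at h1
    linarith
  have hnn : 0 ≤ ∫ z, dissipation a g z :=
    integral_nonneg_of_ae (ae_offDiag.mono fun z hz => dissipation_nonneg ha_nonneg hpos hz)
  rw [e1, e2, e3, hsplit]
  exact ⟨rfl, neg_nonpos.mpr hnn⟩
end
end

section
/- Let N ≥ 1, 1 ≤ m ≤ N, and let g_N be a symmetric (exchangeable) probability density on ℝ^{3N} with finite Fisher information ∫_{ℝ^{3N}} |∇g_N|²/g_N < ∞. Let g_{N,m}(v¹,…,v^m) = ∫_{ℝ^{3(N−m)}} g_N dv^{m+1}…dv^N be its m-particle marginal. Then the renormalised Fisher information is sub-additive: (1/m)∫_{ℝ^{3m}} |∇g_{N,m}|²/g_{N,m} dV_m ≤ (1/N)∫_{ℝ^{3N}} |∇g_N|²/g_N dV_N. -/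
open MeasureTheory Real

noncomputable section

abbrev Conf (N : ℕ) := Fin N → V3

/-- Partial derivative of `g : (ℝ³)^N → ℝ` in block `i`, coordinate `α`. -/
def pdN {N : ℕ} (g : Conf N → ℝ) (x : Conf N) (i : Fin N) (α : Fin 3) : ℝ :=
  fderiv ℝ g x (Pi.single i (Pi.single α 1))

/-- Glue a configuration of the first `m` particles with a configuration of the
remaining `N − m` particles. -/
def extendConf {m N : ℕ} (V : Conf m) (W : Conf (N - m)) : Conf N :=
  fun i => if h : (i : ℕ) < m then V ⟨i, h⟩ else W ⟨(i : ℕ) - m, by have := i.isLt; omega⟩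

/-- The `m`-particle marginal of a density on `(ℝ³)^N`. -/
def marginal {N : ℕ} (m : ℕ) (g : Conf N → ℝ) : Conf m → ℝ :=
  fun V => ∫ W : Conf (N - m), g (extendConf V W)

section

open Filter Topology Set

/-- Cauchy–Schwarz inequality for nonnegative square-integrable functions. -/
lemma integral_mul_le_sqrt_mul_sqrt {X : Type*} [MeasurableSpace X] {μ : Measure X} {a b : X → ℝ}
    (ha : Measurable a) (hb : Measurable b) (ha0 : ∀ x, 0 ≤ a x) (hb0 : ∀ x, 0 ≤ b x)
    (hai : Integrable (fun x => a x ^ 2) μ) (hbi : Integrable (fun x => b x ^ 2) μ) :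
    ∫ x, a x * b x ∂μ ≤ √(∫ x, a x ^ 2 ∂μ) * √(∫ x, b x ^ 2 ∂μ) := by
  have ha2 : MemLp a 2 μ := (memLp_two_iff_integrable_sq ha.aestronglyMeasurable).2 hai
  have hb2 : MemLp b 2 μ := (memLp_two_iff_integrable_sq hb.aestronglyMeasurable).2 hbi
  have key := integral_mul_le_Lp_mul_Lq_of_nonneg (μ := μ) Real.HolderConjugate.two_two
    (.of_forall ha0) (.of_forall hb0) (by simpa using ha2) (by simpa using hb2)
  simpa [Real.sqrt_eq_rpow] using key

/-- The reverse triangle inequality in `L²`, applied to square roots of nonnegative functions. -/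
lemma sq_sqrt_integral_sub_sqrt_integral_le {X : Type*} [MeasurableSpace X] {μ : Measure X}
    {a b : X → ℝ} (ha : Measurable a) (hb : Measurable b) (ha0 : ∀ x, 0 ≤ a x)
    (hb0 : ∀ x, 0 ≤ b x) (hai : Integrable a μ) (hbi : Integrable b μ) :
    ENNReal.ofReal ((√(∫ x, a x ∂μ) - √(∫ x, b x ∂μ)) ^ 2)
      ≤ ∫⁻ x, ENNReal.ofReal ((√(a x) - √(b x)) ^ 2) ∂μ := by
  have hsa : ∀ x, √(a x) ^ 2 = a x := fun x => Real.sq_sqrt (ha0 x)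
  have hsb : ∀ x, √(b x) ^ 2 = b x := fun x => Real.sq_sqrt (hb0 x)
  have hcs := integral_mul_le_sqrt_mul_sqrt (μ := μ) ha.sqrt hb.sqrt
    (fun x => Real.sqrt_nonneg _) (fun x => Real.sqrt_nonneg _)
    (by simpa only [hsa] using hai) (by simpa only [hsb] using hbi)
  simp only [hsa, hsb] at hcs
  have hab : Integrable (fun x => √(a x) * √(b x)) μ := by
    refine (hai.add hbi).mono' (ha.sqrt.mul hb.sqrt).aestronglyMeasurable (.of_forall fun x => ?_)
    rw [Real.norm_of_nonneg (by positivity)]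
    simp only [Pi.add_apply]
    nlinarith [hsa x, hsb x, sq_nonneg (√(a x) - √(b x)), ha0 x, hb0 x]
  have hexp : ∀ x, (√(a x) - √(b x)) ^ 2 = a x + b x - 2 * (√(a x) * √(b x)) := fun x => by
    rw [sub_sq, hsa, hsb]; ring
  have hadd : Integrable (fun x => a x + b x) μ := hai.add hbi
  have hint : Integrable (fun x => a x + b x - 2 * (√(a x) * √(b x))) μ :=
    hadd.sub (hab.const_mul 2)
  rw [← ofReal_integral_eq_lintegral_ofReal (by simpa only [hexp] using hint)
    (.of_forall fun x => sq_nonneg _)]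
  refine ENNReal.ofReal_le_ofReal ?_
  simp only [hexp]
  rw [integral_sub hadd (hab.const_mul 2), integral_add hai hbi, integral_const_mul,
    sub_sq, Real.sq_sqrt (integral_nonneg ha0), Real.sq_sqrt (integral_nonneg hb0)]
  linarith

lemma deriv_eq_zero_of_nonneg_of_eq_zero {φ : ℝ → ℝ} (h0 : ∀ s, 0 ≤ φ s) {s : ℝ}
    (hs : φ s = 0) : deriv φ s = 0 :=
  IsLocalMin.deriv_eq_zero (.of_forall fun t => by rw [hs]; exact h0 t)

/-- The increment of `√φ` is bounded by the integral of `|φ'| / (2√φ)`, even when `φ` vanishes. -/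
lemma abs_sqrt_sub_sqrt_le_integral {φ : ℝ → ℝ} (hφ : Differentiable ℝ φ) (h0 : ∀ s, 0 ≤ φ s)
    {h : ℝ} (hh : 0 ≤ h)
    (hq : IntervalIntegrable (fun s => |deriv φ s| / (2 * √(φ s))) volume 0 h) :
    |√(φ h) - √(φ 0)| ≤ ∫ s in 0..h, |deriv φ s| / (2 * √(φ s)) := by
  have hε : ∀ ε > 0, |√(φ h + ε) - √(φ 0 + ε)| ≤ ∫ s in 0..h, |deriv φ s| / (2 * √(φ s)) := by
    intro ε hε
    have hpos : ∀ s, 0 < φ s + ε := fun s => by linarith [h0 s]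
    have hder : ∀ s, HasDerivAt (fun s => √(φ s + ε)) (deriv φ s / (2 * √(φ s + ε))) s :=
      fun s => ((hφ s).hasDerivAt.add_const ε).sqrt (hpos s).ne'
    have hle : ∀ s, ‖deriv φ s / (2 * √(φ s + ε))‖ ≤ |deriv φ s| / (2 * √(φ s)) := by
      intro s
      have := Real.sqrt_pos.2 (hpos s)
      rw [norm_div, Real.norm_eq_abs, Real.norm_of_nonneg (by positivity)]
      rcases (h0 s).eq_or_lt with hs | hs
      · simp [deriv_eq_zero_of_nonneg_of_eq_zero h0 hs.symm]
      · have := Real.sqrt_pos.2 hs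
        gcongr
        linarith
    have hmeas : Measurable fun s => deriv φ s / (2 * √(φ s + ε)) := by
      have := hφ.continuous.measurable
      have := measurable_deriv φ
      fun_prop
    have hint : IntervalIntegrable (fun s => deriv φ s / (2 * √(φ s + ε))) volume 0 h :=
      hq.mono_fun hmeas.aestronglyMeasurable
        (.of_forall fun s => (hle s).trans (le_abs_self _))
    rw [← intervalIntegral.integral_eq_sub_of_hasDerivAt (fun s _ => hder s) hint]
    exact intervalIntegral.norm_integral_le_of_norm_le hh (.of_forall fun s _ => hle s) hq
  have hlim : Tendsto (fun ε => |√(φ h + ε) - √(φ 0 + ε)|) (𝓝[>] 0) (𝓝 |√(φ h) - √(φ 0)|) := by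
    have : Continuous fun ε => |√(φ h + ε) - √(φ 0 + ε)| := by fun_prop
    simpa using this.continuousWithinAt (s := Ioi 0) (x := 0) |>.tendsto
  exact le_of_tendsto hlim (eventually_mem_nhdsWithin.mono hε)

lemma sq_sqrt_sub_sqrt_le_lintegral {φ : ℝ → ℝ} (hφ : Differentiable ℝ φ) (h0 : ∀ s, 0 ≤ φ s)
    {h : ℝ} (hh : 0 < h) :
    ENNReal.ofReal ((√(φ h) - √(φ 0)) ^ 2)
      ≤ ENNReal.ofReal h * ∫⁻ s in Ioc 0 h, ENNReal.ofReal (deriv φ s ^ 2 / (4 * φ s)) := by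
  by_cases htop : ∫⁻ s in Ioc 0 h, ENNReal.ofReal (deriv φ s ^ 2 / (4 * φ s)) = ⊤
  · rw [htop, ENNReal.mul_top (by simpa using hh)]; exact le_top
  have hmφ := hφ.continuous.measurable
  have hmd := measurable_deriv φ
  set q : ℝ → ℝ := fun s => |deriv φ s| / (2 * √(φ s)) with hqdef
  have hq0 : ∀ s, 0 ≤ q s := fun s => by positivity
  have hqm : Measurable q := by have := hmd.abs; fun_prop
  have hq2 : ∀ s, deriv φ s ^ 2 / (4 * φ s) = q s ^ 2 := fun s => by
    rw [hqdef]; simp only [div_pow, sq_abs, mul_pow, Real.sq_sqrt (h0 s)]; norm_num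
  simp only [hq2] at htop ⊢
  have hint2 : Integrable (fun s => q s ^ 2) (volume.restrict (Ioc 0 h)) :=
    ⟨(hqm.pow_const 2).aestronglyMeasurable,
      (hasFiniteIntegral_iff_ofReal (.of_forall fun s => sq_nonneg _)).2 (lt_top_iff_ne_top.2 htop)⟩
  have hint : Integrable q (volume.restrict (Ioc 0 h)) :=
    ((memLp_two_iff_integrable_sq hqm.aestronglyMeasurable).2 hint2).integrable one_le_two
  have hcs := integral_mul_le_sqrt_mul_sqrt (μ := volume.restrict (Ioc 0 h)) (a := fun _ => 1)
    measurable_const hqm (fun _ => zero_le_one) hq0 (by simp) hint2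
  have hbd := abs_sqrt_sub_sqrt_le_integral hφ h0 hh.le
    ((intervalIntegrable_iff_integrableOn_Ioc_of_le hh.le).2 hint)
  rw [intervalIntegral.integral_of_le hh.le] at hbd
  simp only [one_mul, one_pow, integral_const, smul_eq_mul, mul_one] at hcs
  rw [measureReal_restrict_apply_univ, Real.volume_real_Ioc_of_le hh.le, sub_zero] at hcs
  rw [← ofReal_integral_eq_lintegral_ofReal hint2 (.of_forall fun s => sq_nonneg _),
    ← ENNReal.ofReal_mul hh.le]
  refine ENNReal.ofReal_le_ofReal ?_
  calc (√(φ h) - √(φ 0)) ^ 2 = |√(φ h) - √(φ 0)| ^ 2 := (sq_abs _).symm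
    _ ≤ (√h * √(∫ s in Ioc 0 h, q s ^ 2)) ^ 2 := by gcongr; exact hbd.trans hcs
    _ = h * ∫ s in Ioc 0 h, q s ^ 2 := by
      rw [mul_pow, Real.sq_sqrt hh.le, Real.sq_sqrt (integral_nonneg fun s => sq_nonneg _)]

/-- `L²` translation estimate for `√g`, in terms of the directional Fisher information of `g`. -/
lemma lintegral_sq_sqrt_translate_sub_le {N : ℕ} {g : Conf N → ℝ} (hg : Differentiable ℝ g)
    (h0 : ∀ x, 0 ≤ g x) (e : Conf N) {h : ℝ} (hh : 0 < h) :
    ∫⁻ x, ENNReal.ofReal ((√(g (x + h • e)) - √(g x)) ^ 2)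
      ≤ ENNReal.ofReal (h ^ 2) * ∫⁻ x, ENNReal.ofReal (fderiv ℝ g x e ^ 2 / (4 * g x)) := by
  set F : Conf N → ENNReal := fun x => ENNReal.ofReal (fderiv ℝ g x e ^ 2 / (4 * g x))
  have hFm : Measurable F := by
    have := measurable_fderiv_apply_const ℝ g e
    have := hg.continuous.measurable
    fun_prop
  have hline : ∀ x, ENNReal.ofReal ((√(g (x + h • e)) - √(g x)) ^ 2)
      ≤ ENNReal.ofReal h * ∫⁻ s in Ioc 0 h, F (x + s • e) := by
    intro x
    have hd : ∀ s : ℝ, HasDerivAt (fun s : ℝ => g (x + s • e)) (fderiv ℝ g (x + s • e) e) s := by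
      intro s
      have hlin : HasDerivAt (fun s : ℝ => x + s • e) e s := by
        simpa using ((hasDerivAt_id s).smul_const e).const_add x
      exact (hg _).hasFDerivAt.comp_hasDerivAt s hlin
    have := sq_sqrt_sub_sqrt_le_lintegral (φ := fun s => g (x + s • e))
      (fun s => (hd s).differentiableAt) (fun s => h0 _) hh
    simpa only [(hd _).deriv, zero_smul, add_zero] using this
  calc _ ≤ ∫⁻ x, ENNReal.ofReal h * ∫⁻ s in Ioc 0 h, F (x + s • e) := lintegral_mono hline
    _ = ENNReal.ofReal h * ∫⁻ x, ∫⁻ s in Ioc 0 h, F (x + s • e) :=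
      lintegral_const_mul' _ _ ENNReal.ofReal_ne_top
    _ = ENNReal.ofReal h * ∫⁻ s in Ioc 0 h, ∫⁻ x, F (x + s • e) := by
      rw [lintegral_lintegral_swap]
      have : Measurable fun p : Conf N × ℝ => p.1 + p.2 • e := by fun_prop
      exact (hFm.comp this).aemeasurable
    _ = _ := by
      simp only [lintegral_add_right_eq_self F, lintegral_const, Measure.restrict_apply_univ,
        Real.volume_Ioc, sub_zero]
      rw [sq, ENNReal.ofReal_mul hh.le]; ring

lemma measurePreserving_extendConf {m N : ℕ} (hmN : m ≤ N) :
    MeasurePreserving (fun p : Conf m × Conf (N - m) => (extendConf p.1 p.2 : Conf N)) := by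
  let e : Fin m ⊕ Fin (N - m) ≃ Fin N := finSumFinEquiv.trans (finCongr (by omega))
  have hpres := (volume_measurePreserving_piCongrLeft (fun _ : Fin N => V3) e).comp
    (volume_measurePreserving_sumPiEquivProdPi_symm fun _ : Fin m ⊕ Fin (N - m) => V3)
  suffices heq : (fun p : Conf m × Conf (N - m) => (extendConf p.1 p.2 : Conf N)) =
      MeasurableEquiv.piCongrLeft (fun _ : Fin N => V3) e ∘
        (MeasurableEquiv.sumPiEquivProdPi fun _ : Fin m ⊕ Fin (N - m) => V3).symm by
    rw [heq]; exact hpres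
  funext p i
  obtain ⟨j, rfl⟩ := e.surjective i
  rw [Function.comp_apply, MeasurableEquiv.coe_piCongrLeft]
  erw [Equiv.piCongrLeft_apply_apply]
  rcases j with j | j
  · simp [extendConf, e]; rfl
  · simp [extendConf, e]; rfl

lemma extendConf_add_smul {m N : ℕ} (V e : Conf m) (W : Conf (N - m)) (t : ℝ) :
    (extendConf (V + t • e) W : Conf N) = extendConf V W + t • extendConf e 0 := by
  funext i
  by_cases hi : (i : ℕ) < m <;> simp [extendConf, hi]

lemma extendConf_single {m N : ℕ} (hmN : m ≤ N) (i : Fin m) (v : V3) :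
    (extendConf (Pi.single i v) 0 : Conf N) = Pi.single (Fin.castLE hmN i) v := by
  funext j
  by_cases hj : (j : ℕ) < m
  · by_cases hij : j = Fin.castLE hmN i
    · subst hij; simp [extendConf]
    · have : (⟨j, hj⟩ : Fin m) ≠ i := fun h => hij (by rw [← h]; rfl)
      simp [extendConf, hj, hij, this]
  · have : j ≠ Fin.castLE hmN i := fun h => hj (by rw [h]; exact i.isLt)
    simp [extendConf, hj, this]

lemma measurable_marginal {N m : ℕ} (hmN : m ≤ N) {g : Conf N → ℝ} (hg : Measurable g) :
    Measurable (marginal m g) :=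
  (StronglyMeasurable.integral_prod_right'
    (hg.comp (measurePreserving_extendConf hmN).measurable).stronglyMeasurable).measurable

/-- `L²` translation estimate for the square root of the marginal. -/
lemma lintegral_sq_sqrt_marginal_translate_sub_le {N m : ℕ} (hmN : m ≤ N) {g : Conf N → ℝ}
    (hg : Differentiable ℝ g) (h0 : ∀ x, 0 ≤ g x) (hint : Integrable g) (e : Conf m)
    {h : ℝ} (hh : 0 < h) :
    ∫⁻ V, ENNReal.ofReal ((√(marginal m g (V + h • e)) - √(marginal m g V)) ^ 2)
      ≤ ENNReal.ofReal (h ^ 2) *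
        ∫⁻ x, ENNReal.ofReal (fderiv ℝ g x (extendConf e 0) ^ 2 / (4 * g x)) := by
  have hgm := hg.continuous.measurable
  have hext := measurePreserving_extendConf hmN
  have hslice : ∀ᵐ V : Conf m, Integrable fun W : Conf (N - m) => g (extendConf V W) :=
    ((hext.integrable_comp hgm.aestronglyMeasurable).2 hint).prod_right_ae
  have hslice' : ∀ᵐ V : Conf m, Integrable fun W : Conf (N - m) => g (extendConf (V + h • e) W) :=
    (measurePreserving_add_right volume (h • e)).quasiMeasurePreserving.ae hslice
  have hmV : ∀ V : Conf m, Measurable fun W : Conf (N - m) => g (extendConf V W) :=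
    fun V => hgm.comp (hext.measurable.comp measurable_prodMk_left)
  have hFm : Measurable fun x : Conf N =>
      ENNReal.ofReal ((√(g (x + h • extendConf e 0)) - √(g x)) ^ 2) := by fun_prop
  calc _ ≤ ∫⁻ V, ∫⁻ W : Conf (N - m), ENNReal.ofReal
        ((√(g (extendConf V W + h • extendConf e 0)) - √(g (extendConf V W))) ^ 2) := by
        refine lintegral_mono_ae ?_
        filter_upwards [hslice, hslice'] with V hV hV'
        simp only [← extendConf_add_smul]
        exact sq_sqrt_integral_sub_sqrt_integral_le (hmV _) (hmV _) (fun _ => h0 _)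
          (fun _ => h0 _) hV' hV
    _ = ∫⁻ x : Conf N, ENNReal.ofReal ((√(g (x + h • extendConf e 0)) - √(g x)) ^ 2) := by
        rw [← hext.lintegral_comp hFm]
        exact (lintegral_prod _ (hFm.comp hext.measurable).aemeasurable).symm
    _ ≤ _ := lintegral_sq_sqrt_translate_sub_le hg h0 _ hh

/-- The difference quotients of `√f` control the directional Fisher information density of `f`. -/
lemma ofReal_fderiv_sq_div_le_liminf {m : ℕ} {f : Conf m → ℝ} (h0 : ∀ V, 0 ≤ f V)
    (V e : Conf m) {t : ℕ → ℝ} (ht : Tendsto t atTop (𝓝[>] 0)) :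
    ENNReal.ofReal (fderiv ℝ f V e ^ 2 / (4 * f V))
      ≤ liminf (fun n => ENNReal.ofReal ((t n ^ 2)⁻¹ * (√(f (V + t n • e)) - √(f V)) ^ 2))
          atTop := by
  by_cases hd : DifferentiableAt ℝ f V
  swap
  · simp [fderiv_zero_of_not_differentiableAt hd]
  rcases (h0 V).eq_or_lt with hV | hV
  · simp [← hV]
  have hline : HasDerivAt (fun s : ℝ => f (V + s • e)) (fderiv ℝ f V e) 0 :=
    hd.hasFDerivAt.hasLineDerivAt e
  have hsqrt : HasDerivAt (fun s : ℝ => √(f (V + s • e))) (fderiv ℝ f V e / (2 * √(f V))) 0 := by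
    simpa using hline.sqrt (by simpa using hV.ne')
  have hlim := ((hsqrt.tendsto_slope_zero_right.comp ht).pow 2)
  refine le_of_eq (Tendsto.liminf_eq ?_).symm
  refine (ENNReal.continuous_ofReal.tendsto _).comp ?_
  convert hlim using 2
  · simp [mul_pow]
  · rw [div_pow, mul_pow, Real.sq_sqrt hV.le]; norm_num

/-- Directional Fisher information does not increase under marginalisation. -/
lemma lintegral_fderiv_marginal_sq_div_le {N m : ℕ} (hmN : m ≤ N) {g : Conf N → ℝ}
    (hg : Differentiable ℝ g) (h0 : ∀ x, 0 ≤ g x) (hint : Integrable g) (e : Conf m) :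
    ∫⁻ V, ENNReal.ofReal (fderiv ℝ (marginal m g) V e ^ 2 / (4 * marginal m g V))
      ≤ ∫⁻ x, ENNReal.ofReal (fderiv ℝ g x (extendConf e 0) ^ 2 / (4 * g x)) := by
  have hfm := measurable_marginal hmN hg.continuous.measurable
  let t : ℕ → ℝ := fun n => 1 / ((n : ℝ) + 1)
  have htpos : ∀ n, 0 < t n := fun n => Nat.one_div_pos_of_nat
  have ht : Tendsto t atTop (𝓝[>] 0) :=
    tendsto_nhdsWithin_iff.2 ⟨tendsto_one_div_add_atTop_nhds_zero_nat, .of_forall htpos⟩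
  refine (lintegral_mono fun V => ofReal_fderiv_sq_div_le_liminf
    (f := marginal m g) (fun V => integral_nonneg fun _ => h0 _) V e ht).trans ?_
  refine (lintegral_liminf_le' fun n => Measurable.aemeasurable (by fun_prop)).trans ?_
  refine liminf_le_of_le (by isBoundedDefault) fun b hb => ?_
  obtain ⟨n, hn⟩ := hb.exists
  refine hn.trans ?_
  have hpos : 0 < t n ^ 2 := pow_pos (htpos n) 2
  simp only [ENNReal.ofReal_mul (inv_nonneg.2 hpos.le)]
  rw [lintegral_const_mul' _ _ ENNReal.ofReal_ne_top]
  calc _ ≤ ENNReal.ofReal (t n ^ 2)⁻¹ * (ENNReal.ofReal (t n ^ 2) *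
        ∫⁻ x, ENNReal.ofReal (fderiv ℝ g x (extendConf e 0) ^ 2 / (4 * g x))) := by
        gcongr
        exact lintegral_sq_sqrt_marginal_translate_sub_le hmN hg h0 hint e (htpos n)
    _ = _ := by
        rw [← mul_assoc, ← ENNReal.ofReal_mul (inv_nonneg.2 hpos.le), inv_mul_cancel₀ hpos.ne',
          ENNReal.ofReal_one, one_mul]

lemma pdN_comp_perm {N : ℕ} {g : Conf N → ℝ} (hg : Differentiable ℝ g) (σ : Equiv.Perm (Fin N))
    (hσ : ∀ x : Conf N, g (x ∘ σ) = g x) (x : Conf N) (i : Fin N) (α : Fin 3) :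
    pdN g (x ∘ σ) i α = pdN g x (σ i) α := by
  have hs : (Pi.single i (Pi.single α 1) : Conf N) = Pi.single (σ i) (Pi.single α 1) ∘ σ := by
    funext j
    by_cases hj : j = i
    · subst hj; simp
    · have : σ j ≠ σ i := fun h => hj (σ.injective h)
      simp [hj, this]
  unfold pdN
  rw [← (hg _).lineDeriv_eq_fderiv, ← (hg _).lineDeriv_eq_fderiv, hs]
  unfold lineDeriv
  congr 1
  funext t
  exact hσ (x + t • (Pi.single (σ i) (Pi.single α 1) : Conf N))

/-- By exchangeability, every particle carries the same Fisher information. -/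
lemma integral_pdN_sq_div_eq {N : ℕ} {g : Conf N → ℝ} (hg : Differentiable ℝ g)
    (hsymm : ∀ σ : Equiv.Perm (Fin N), ∀ x : Conf N, g (x ∘ σ) = g x) (i j : Fin N) :
    ∫ x, (∑ α, pdN g x i α ^ 2) / g x = ∫ x, (∑ α, pdN g x j α ^ 2) / g x := by
  have hpres := volume_measurePreserving_piCongrLeft (fun _ : Fin N => V3) (Equiv.swap i j)
  have hcomp : ∀ x : Conf N,
      MeasurableEquiv.piCongrLeft (fun _ : Fin N => V3) (Equiv.swap i j) x
        = x ∘ Equiv.swap i j := by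
    intro x
    funext k
    obtain ⟨l, rfl⟩ := (Equiv.swap i j).surjective k
    rw [MeasurableEquiv.coe_piCongrLeft]
    erw [Equiv.piCongrLeft_apply_apply]
    simp
  rw [← hpres.integral_comp' fun x : Conf N => (∑ α, pdN g x i α ^ 2) / g x]
  simp only [hcomp, pdN_comp_perm hg _ (hsymm _), hsymm, Equiv.swap_apply_left]

lemma lintegral_pdN_marginal_sq_div_le {N m : ℕ} (hmN : m ≤ N) {g : Conf N → ℝ}
    (hg : Differentiable ℝ g) (h0 : ∀ x, 0 ≤ g x) (hint : Integrable g) (i : Fin m) (α : Fin 3) :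
    ∫⁻ V, ENNReal.ofReal (pdN (marginal m g) V i α ^ 2 / marginal m g V)
      ≤ ∫⁻ x, ENNReal.ofReal (pdN g x (Fin.castLE hmN i) α ^ 2 / g x) := by
  have hfour : ∀ a b : ℝ, ENNReal.ofReal (a / b)
      = ENNReal.ofReal 4 * ENNReal.ofReal (a / (4 * b)) := fun a b => by
    rw [← ENNReal.ofReal_mul (by norm_num)]; congr 1; ring
  simp only [pdN, ← extendConf_single hmN]
  rw [lintegral_congr fun _ => hfour _ _, lintegral_congr fun _ => hfour _ _,
    lintegral_const_mul' _ _ ENNReal.ofReal_ne_top,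
    lintegral_const_mul' _ _ ENNReal.ofReal_ne_top]
  gcongr
  exact lintegral_fderiv_marginal_sq_div_le hmN hg h0 hint _

@[fun_prop]
lemma measurable_pdN {N : ℕ} (g : Conf N → ℝ) (i : Fin N) (α : Fin 3) :
    Measurable fun x => pdN g x i α :=
  measurable_fderiv_apply_const ℝ g _

/-- The Fisher information of the marginal is at most the part of the Fisher information of `g`
carried by the first `m` particles. -/
lemma integral_fisher_marginal_le {N m : ℕ} (hmN : m ≤ N) {g : Conf N → ℝ}
    (hg : Differentiable ℝ g) (h0 : ∀ x, 0 ≤ g x) (hint : Integrable g)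
    (hfi : ∀ i, Integrable fun x => (∑ α, pdN g x i α ^ 2) / g x) :
    ∫ V, (∑ i, ∑ α, pdN (marginal m g) V i α ^ 2) / marginal m g V
      ≤ ∑ i : Fin m, ∫ x, (∑ α, pdN g x (Fin.castLE hmN i) α ^ 2) / g x := by
  have hgm := hg.continuous.measurable
  have hfm := measurable_marginal hmN hgm
  have hf0 : ∀ V, 0 ≤ marginal m g V := fun V => integral_nonneg fun _ => h0 _
  have hnn : ∀ i x, 0 ≤ (∑ α, pdN g x i α ^ 2) / g x := fun i x =>
    div_nonneg (Finset.sum_nonneg fun _ _ => sq_nonneg _) (h0 x)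
  rw [integral_eq_lintegral_of_nonneg_ae
    (.of_forall fun V => div_nonneg (Finset.sum_nonneg fun _ _ => Finset.sum_nonneg fun _ _ =>
      sq_nonneg _) (hf0 V)) (Measurable.aestronglyMeasurable (by fun_prop))]
  refine ENNReal.toReal_le_of_le_ofReal
    (Finset.sum_nonneg fun i _ => integral_nonneg (hnn _)) ?_
  rw [ENNReal.ofReal_sum_of_nonneg fun i _ => integral_nonneg (hnn _)]
  have hsplit : ∀ V, ENNReal.ofReal ((∑ i, ∑ α, pdN (marginal m g) V i α ^ 2) / marginal m g V)
      = ∑ i, ∑ α, ENNReal.ofReal (pdN (marginal m g) V i α ^ 2 / marginal m g V) := fun V => by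
    have hterm : ∀ i α, 0 ≤ pdN (marginal m g) V i α ^ 2 / marginal m g V :=
      fun i α => div_nonneg (sq_nonneg _) (hf0 V)
    simp only [Finset.sum_div]
    rw [ENNReal.ofReal_sum_of_nonneg fun i _ => Finset.sum_nonneg fun α _ => hterm i α]
    exact Finset.sum_congr rfl fun i _ => ENNReal.ofReal_sum_of_nonneg fun α _ => hterm i α
  have hsplit' : ∀ i x, ENNReal.ofReal ((∑ α, pdN g x i α ^ 2) / g x)
      = ∑ α, ENNReal.ofReal (pdN g x i α ^ 2 / g x) := fun i x => by
    rw [Finset.sum_div]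
    exact ENNReal.ofReal_sum_of_nonneg fun α _ => div_nonneg (sq_nonneg _) (h0 x)
  simp only [hsplit]
  rw [lintegral_finsetSum _ fun i _ => by fun_prop]
  refine Finset.sum_le_sum fun i _ => ?_
  rw [ofReal_integral_eq_lintegral_ofReal (hfi _) (.of_forall (hnn _)),
    lintegral_congr (hsplit' _), lintegral_finsetSum _ fun α _ => by fun_prop,
    lintegral_finsetSum _ fun α _ => by fun_prop]
  exact Finset.sum_le_sum fun α _ => lintegral_pdN_marginal_sq_div_le hmN hg h0 hint i α

end

/-- Sub-additivity of the renormalised Fisher information: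
`(1/m)∫ |∇g_{N,m}|²/g_{N,m} ≤ (1/N)∫ |∇g_N|²/g_N` for a symmetric probability
density `g_N` with finite Fisher information. -/
theorem fisher_subadditivity
    {N : ℕ} (hN : 1 ≤ N) (m : ℕ) (hm : 1 ≤ m) (hmN : m ≤ N)
    (g : Conf N → ℝ) (hmeas : Measurable g) (hnonneg : ∀ x, 0 ≤ g x)
    (hmass : (∫ x : Conf N, g x) = 1)
    (hsymm : ∀ σ : Equiv.Perm (Fin N), ∀ x : Conf N, g (x ∘ σ) = g x)
    (hdiff : Differentiable ℝ g)
    (hfisher : Integrable (fun x : Conf N => (∑ i, ∑ α, (pdN g x i α) ^ 2) / g x)) :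
    (1 / (m : ℝ)) * ∫ V : Conf m,
        (∑ i, ∑ α, (pdN (marginal m g) V i α) ^ 2) / marginal m g V
      ≤ (1 / (N : ℝ)) * ∫ x : Conf N, (∑ i, ∑ α, (pdN g x i α) ^ 2) / g x := by
  have hint : Integrable g := .of_integral_ne_zero (by rw [hmass]; exact one_ne_zero)
  have hfi : ∀ i, Integrable fun x => (∑ α, pdN g x i α ^ 2) / g x := by
    intro i
    refine hfisher.mono' (Measurable.aestronglyMeasurable (by fun_prop)) (.of_forall fun x => ?_)
    rw [Real.norm_of_nonneg (div_nonneg (Finset.sum_nonneg fun _ _ => sq_nonneg _) (hnonneg x))]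
    have := hnonneg x
    gcongr
    exact Finset.single_le_sum (f := fun i => ∑ α, pdN g x i α ^ 2)
      (fun _ _ => Finset.sum_nonneg fun _ _ => sq_nonneg _) (Finset.mem_univ i)
  have hle := integral_fisher_marginal_le hmN hdiff hnonneg hint hfi
  have hfull : ∫ x, (∑ i, ∑ α, pdN g x i α ^ 2) / g x
      = ∑ i, ∫ x, (∑ α, pdN g x i α ^ 2) / g x := by
    rw [← integral_finsetSum _ fun i _ => hfi i]
    simp only [Finset.sum_div]
  have heq := integral_pdN_sq_div_eq hdiff hsymm (j := ⟨0, hN⟩)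
  simp only [heq, Finset.sum_const, Finset.card_univ, Fintype.card_fin, nsmul_eq_mul]
    at hle hfull
  have hm0 : (0 : ℝ) < m := by exact_mod_cast hm
  have hN0 : (0 : ℝ) < N := by exact_mod_cast hN
  rw [hfull, one_div, one_div, inv_mul_cancel_left₀ hN0.ne', inv_mul_le_iff₀ hm0]
  exact hle
end
end
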